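/- arXiv:math/0701617 — 8 statements merged into one kernel-verified Lean document; each statement's English description precedes it below -/
import Mathlib

section
/- Let C > 0, R > 0 and 0 < δ ≤ R. Let φ : ℂ² → ℂ² be smooth on the open ball of radius R around the origin (with respect to the Euclidean norm), and suppose that for every v with ‖v‖ ≤ R one has ‖φ(v) − v‖ ≤ C‖v‖² and ‖Dφ(v) − id‖ ≤ C‖v‖, where Dφ(v) is the real Fréchet derivative of φ at v. Let β : ℝ → ℝ be a smooth function with 0 ≤ β ≤ 1, β(r) = 0 for r ≤ 1/3, β(r) = 1 for r ≥ 1, and |β′(r)| ≤ 2 for all r. Define φ′(v) = v + β(‖v‖/δ)·(φ(v) − v). Then: (i) φ′ is smooth on the ball of radius R; (ii) φ′(v) = φ(v) whenever δ ≤ ‖v‖ ≤ R; (iii) φ′(v) = v whenever ‖v‖ ≤ δ/3 (in particular φ′ is holomorphic on the ball of radius δ/3); (iv) for every v with ‖v‖ ≤ R one has ‖φ′(v) − φ(v)‖ + ‖Dφ′(v) − Dφ(v)‖ ≤ (3 + δ)·C·δ; and (v) if φ maps points of the form (w,0) in the ball to points of ℂ × {0}, then so does φ′. -/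
noncomputable section

/-- `ℂ²` with the Euclidean norm `‖(w,z)‖ = (|w|² + |z|²)^{1/2}`. -/
abbrev Csq : Type := EuclideanSpace ℂ (Fin 2)

/-!
The interpolation is the affine combination `φ' = (1 - g) φ₀ + g φ` of `φ₀ = id` and `φ`, weighted
by the radial cutoff `g v = β (‖v‖ / δ)`, so `Dφ' - Dφ = (g - 1) (Dφ - Dφ₀) + (φ - φ₀) Dg`. The
derivative `Dg` has size `O(1 / δ)`, but it multiplies `φ - φ₀ = O(δ²)`, which leaves `O(δ)`.
Where `‖v‖ ≥ δ`, the weight attains its maximum `1`, hence `Dg = 0` and `Dφ' = Dφ`.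
-/

open AffineMap Topology

section LineMap

variable {𝕜 E F : Type*} [NontriviallyNormedField 𝕜]
  [NormedAddCommGroup E] [NormedSpace 𝕜 E] [NormedAddCommGroup F] [NormedSpace 𝕜 F]
  {f₀ f₁ : E → F} {f₀' f₁' : E →L[𝕜] F} {g : E → 𝕜} {g' : E →L[𝕜] 𝕜} {v : E}

lemma hasFDerivAt_lineMap (hf₀ : HasFDerivAt f₀ f₀' v) (hf₁ : HasFDerivAt f₁ f₁' v)
    (hg : HasFDerivAt g g' v) :
    HasFDerivAt (fun w => lineMap (f₀ w) (f₁ w) (g w))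
      (g v • (f₁' - f₀') + g'.smulRight (f₁ v - f₀ v) + f₀') v := by
  simp only [lineMap_apply_module']
  exact (hg.smul (hf₁.sub hf₀)).add hf₀

lemma differentiableAt_lineMap_iff_right (hf₀ : DifferentiableAt 𝕜 f₀ v)
    (hg : DifferentiableAt 𝕜 g v) (hgv : g v ≠ 0) :
    DifferentiableAt 𝕜 (fun w => lineMap (f₀ w) (f₁ w) (g w)) v ↔ DifferentiableAt 𝕜 f₁ v := by
  refine ⟨fun h => ?_, fun hf₁ => (hasFDerivAt_lineMap hf₀.hasFDerivAt hf₁.hasFDerivAt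
    hg.hasFDerivAt).differentiableAt⟩
  -- Interpolating with the inverse weight recovers `f₁`.
  have hinv : DifferentiableAt 𝕜
      (fun w => lineMap (f₀ w) (lineMap (f₀ w) (f₁ w) (g w) : F) (g⁻¹ w)) v :=
    (hasFDerivAt_lineMap hf₀.hasFDerivAt h.hasFDerivAt (hg.inv hgv).hasFDerivAt).differentiableAt
  refine hinv.congr_of_eventuallyEq ?_
  filter_upwards [hg.continuousAt.eventually_ne hgv] with w hw
  rw [Pi.inv_apply, lineMap_lineMap_right, inv_mul_cancel₀ hw, lineMap_apply_one]

lemma fderiv_lineMap_of_eq_one (hf₀ : DifferentiableAt 𝕜 f₀ v)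
    (hg : HasFDerivAt g (0 : E →L[𝕜] 𝕜) v) (hgv : g v = 1) :
    fderiv 𝕜 (fun w => lineMap (f₀ w) (f₁ w) (g w)) v = fderiv 𝕜 f₁ v := by
  have hiff := differentiableAt_lineMap_iff_right (f₁ := f₁) hf₀ hg.differentiableAt (by simp [hgv])
  by_cases hf₁ : DifferentiableAt 𝕜 f₁ v
  · simpa [hgv] using (hasFDerivAt_lineMap hf₀.hasFDerivAt hf₁.hasFDerivAt hg).fderiv
  · -- Both derivatives are the junk value `0`.
    rw [fderiv_zero_of_not_differentiableAt hf₁,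
      fderiv_zero_of_not_differentiableAt (mt hiff.1 hf₁)]

end LineMap

section Estimates

variable {E F : Type*} [NormedAddCommGroup E] [NormedSpace ℝ E]
  [NormedAddCommGroup F] [NormedSpace ℝ F] {f₀ f₁ : E → F} {g : E → ℝ} {v : E}

lemma norm_lineMap_sub_right_le (x y : F) {t : ℝ} (ht₀ : 0 ≤ t) (ht₁ : t ≤ 1) :
    ‖lineMap x y t - y‖ ≤ ‖y - x‖ := by
  rw [← dist_eq_norm, dist_lineMap_right, Real.norm_of_nonneg (sub_nonneg.2 ht₁), dist_comm,
    dist_eq_norm]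
  exact mul_le_of_le_one_left (norm_nonneg _) (sub_le_self 1 ht₀)

lemma norm_fderiv_lineMap_sub_right_le (hf₀ : DifferentiableAt ℝ f₀ v)
    (hf₁ : DifferentiableAt ℝ f₁ v) (hg : DifferentiableAt ℝ g v) (hg₀ : 0 ≤ g v)
    (hg₁ : g v ≤ 1) :
    ‖fderiv ℝ (fun w => lineMap (f₀ w) (f₁ w) (g w)) v - fderiv ℝ f₁ v‖ ≤
      ‖fderiv ℝ f₁ v - fderiv ℝ f₀ v‖ + ‖fderiv ℝ g v‖ * ‖f₁ v - f₀ v‖ := by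
  have hderiv : fderiv ℝ (fun w => lineMap (f₀ w) (f₁ w) (g w)) v - fderiv ℝ f₁ v =
      (lineMap (fderiv ℝ f₀ v) (fderiv ℝ f₁ v) (g v) - fderiv ℝ f₁ v) +
        (fderiv ℝ g v).smulRight (f₁ v - f₀ v) := by
    rw [(hasFDerivAt_lineMap hf₀.hasFDerivAt hf₁.hasFDerivAt hg.hasFDerivAt).fderiv,
      lineMap_apply_module']
    abel
  rw [hderiv, ← ContinuousLinearMap.norm_smulRight_apply]
  exact norm_add_le_of_le (norm_lineMap_sub_right_le _ _ hg₀ hg₁) le_rfl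

lemma norm_fderiv_comp_norm_le {b : ℝ → F} {K : ℝ} (hb : Differentiable ℝ b)
    (hK : ∀ r, ‖deriv b r‖ ≤ K) (v : E) : ‖fderiv ℝ (fun w : E => b ‖w‖) v‖ ≤ K := by
  lift K to NNReal using (norm_nonneg _).trans (hK 0)
  have hb_lip : LipschitzWith K b := lipschitzWith_of_nnnorm_deriv_le hb hK
  have hcomp_lip : LipschitzWith K fun w : E => b ‖w‖ := by
    simpa only [mul_one, Function.comp_def] using hb_lip.comp lipschitzWith_one_norm
  exact norm_fderiv_le_of_lipschitz ℝ hcomp_lip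

lemma norm_fderiv_comp_norm_div_le {b : ℝ → F} {K δ : ℝ} (hb : Differentiable ℝ b)
    (hK : ∀ r, ‖deriv b r‖ ≤ K) (hδ : 0 < δ) (v : E) :
    ‖fderiv ℝ (fun w : E => b (‖w‖ / δ)) v‖ ≤ K / δ := by
  refine norm_fderiv_comp_norm_le (b := fun r => b (r / δ))
    (hb.comp (differentiable_id.div_const δ)) (fun r => ?_) v
  have hderiv : deriv (fun r => b (r / δ)) r = δ⁻¹ • deriv b (r / δ) := by
    simpa only [div_eq_inv_mul] using deriv_comp_mul_left δ⁻¹ b r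
  rw [hderiv, norm_smul, norm_inv, Real.norm_of_nonneg hδ.le, div_eq_inv_mul K]
  gcongr
  exact hK _

lemma norm_lineMap_sub_add_norm_fderiv_sub_le {C δ K : ℝ} (hC : 0 ≤ C) (hδ : 0 < δ)
    (hf₀ : Differentiable ℝ f₀) (hf₁ : ∀ w, ‖w‖ < δ → DifferentiableAt ℝ f₁ w)
    (hdist : ∀ w, ‖w‖ < δ → ‖f₁ w - f₀ w‖ ≤ C * ‖w‖ ^ 2)
    (hdist' : ∀ w, ‖w‖ < δ → ‖fderiv ℝ f₁ w - fderiv ℝ f₀ w‖ ≤ C * ‖w‖)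
    (hg : Differentiable ℝ g) (hg01 : ∀ w, 0 ≤ g w ∧ g w ≤ 1) (hg1 : ∀ w, δ ≤ ‖w‖ → g w = 1)
    (hg' : ∀ w, ‖fderiv ℝ g w‖ ≤ K / δ) (v : E) :
    ‖lineMap (f₀ v) (f₁ v) (g v) - f₁ v‖ +
      ‖fderiv ℝ (fun w => lineMap (f₀ w) (f₁ w) (g w)) v - fderiv ℝ f₁ v‖ ≤
        (1 + K + δ) * C * δ := by
  have hKδ : 0 ≤ K / δ := (norm_nonneg _).trans (hg' v)
  have hK : 0 ≤ K := by simpa [hδ.ne'] using mul_nonneg hKδ hδ.le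
  rcases le_or_gt δ ‖v‖ with hv | hv
  · have hmax : IsLocalMax g v := .of_forall fun w => (hg01 w).2.trans_eq (hg1 v hv).symm
    have hg0 : HasFDerivAt g 0 v := hmax.fderiv_eq_zero ▸ (hg v).hasFDerivAt
    rw [fderiv_lineMap_of_eq_one (hf₀ v) hg0 (hg1 v hv), hg1 v hv, lineMap_apply_one]
    simp only [sub_self, norm_zero, add_zero]
    positivity
  · obtain ⟨hg₀, hg₁⟩ := hg01 v
    have hvalue : ‖f₁ v - f₀ v‖ ≤ C * δ ^ 2 := (hdist v hv).trans (by gcongr)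
    have hderiv : ‖fderiv ℝ f₁ v - fderiv ℝ f₀ v‖ ≤ C * δ := (hdist' v hv).trans (by gcongr)
    calc
      _ ≤ ‖f₁ v - f₀ v‖ +
          (‖fderiv ℝ f₁ v - fderiv ℝ f₀ v‖ + ‖fderiv ℝ g v‖ * ‖f₁ v - f₀ v‖) :=
        add_le_add (norm_lineMap_sub_right_le _ _ hg₀ hg₁)
          (norm_fderiv_lineMap_sub_right_le (hf₀ v) (hf₁ v hv) (hg v) hg₀ hg₁)
      _ ≤ C * δ ^ 2 + (C * δ + K / δ * (C * δ ^ 2)) := by gcongr; exact hg' v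
      _ = (1 + K + δ) * C * δ := by field_simp; ring

end Estimates

lemma contDiff_comp_norm {E F : Type*} [NormedAddCommGroup E] [InnerProductSpace ℝ E]
    [NormedAddCommGroup F] [NormedSpace ℝ F] {b : ℝ → F} {c : F} {n : WithTop ℕ∞}
    (hb : ContDiff ℝ n b) (hb₀ : ∀ᶠ r in 𝓝 0, b r = c) : ContDiff ℝ n fun v : E => b ‖v‖ := by
  refine contDiff_iff_contDiffAt.2 fun v => ?_
  rcases eq_or_ne v 0 with rfl | hv
  · exact contDiffAt_const.congr_of_eventuallyEq (tendsto_norm_zero.eventually hb₀)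
  · exact hb.contDiffAt.comp v (contDiffAt_norm ℝ hv)

theorem cutoff_interpolation_general {E F : Type*} [NormedAddCommGroup E] [InnerProductSpace ℝ E]
    [NormedAddCommGroup F] [NormedSpace ℝ F] {C δ a K : ℝ} {n : WithTop ℕ∞} (hC : 0 ≤ C)
    (hδ : 0 < δ) (ha : 0 < a) (hn : n ≠ 0) {U : Set E} (hU : Metric.ball 0 δ ⊆ U)
    {φ₀ φ₁ : E → F} (hφ₀ : ContDiff ℝ n φ₀) (hφ₁ : ContDiffOn ℝ n φ₁ U)
    (hdist : ∀ v, ‖v‖ < δ → ‖φ₁ v - φ₀ v‖ ≤ C * ‖v‖ ^ 2)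
    (hdist' : ∀ v, ‖v‖ < δ → ‖fderiv ℝ φ₁ v - fderiv ℝ φ₀ v‖ ≤ C * ‖v‖)
    {β : ℝ → ℝ} (hβ : ContDiff ℝ n β) (hβ01 : ∀ r, 0 ≤ β r ∧ β r ≤ 1)
    (hβ0 : ∀ r ≤ a, β r = 0) (hβ1 : ∀ r, 1 ≤ r → β r = 1) (hβ' : ∀ r, |deriv β r| ≤ K)
    {φ' : E → F} (hφ' : ∀ v, φ' v = lineMap (φ₀ v) (φ₁ v) (β (‖v‖ / δ))) :
    ContDiffOn ℝ n φ' U ∧ (∀ v, δ ≤ ‖v‖ → φ' v = φ₁ v) ∧ (∀ v, ‖v‖ ≤ a * δ → φ' v = φ₀ v) ∧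
      (∀ v, ‖φ' v - φ₁ v‖ + ‖fderiv ℝ φ' v - fderiv ℝ φ₁ v‖ ≤ (1 + K + δ) * C * δ) ∧
      ∀ s : Set F, Convex ℝ s → ∀ v, φ₀ v ∈ s → φ₁ v ∈ s → φ' v ∈ s := by
  obtain rfl := funext hφ'
  have hg : ContDiff ℝ n fun v : E => β (‖v‖ / δ) :=
    contDiff_comp_norm (hβ.comp (contDiff_id.div_const δ)) <| by
      filter_upwards [Iic_mem_nhds (mul_pos ha hδ)] with r hr
      exact hβ0 _ ((div_le_iff₀ hδ).2 hr)
  have hg1 : ∀ v : E, δ ≤ ‖v‖ → β (‖v‖ / δ) = 1 := fun v hv => hβ1 _ ((one_le_div hδ).2 hv)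
  have hφ₁_diff : ∀ v, ‖v‖ < δ → DifferentiableAt ℝ φ₁ v := fun v hv =>
    ((hφ₁.mono hU).contDiffAt (Metric.isOpen_ball.mem_nhds (by simpa using hv))).differentiableAt hn
  refine ⟨hφ₀.contDiffOn.lineMap hφ₁ hg.contDiffOn, fun v hv => ?_, fun v hv => ?_,
    norm_lineMap_sub_add_norm_fderiv_sub_le hC hδ (hφ₀.differentiable hn) hφ₁_diff hdist hdist'
      (hg.differentiable hn) (fun v => hβ01 _) hg1
      (norm_fderiv_comp_norm_div_le (hβ.differentiable hn) hβ' hδ),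
    fun s hs v h₀ h₁ => hs.lineMap_mem h₀ h₁ (hβ01 _)⟩
  · simp only [hg1 v hv, lineMap_apply_one]
  · simp only [hβ0 _ ((div_le_iff₀ hδ).2 hv), lineMap_apply_zero]

/-- Quantitative cutoff-interpolation estimate from the proof of Lemma 3.2
("makehol") of the paper. -/
theorem cutoff_interpolation
    (C R δ : ℝ) (hC : 0 < C) (hR : 0 < R) (hδ : 0 < δ) (hδR : δ ≤ R)
    (φ : Csq → Csq)
    (hφsmooth : ContDiffOn ℝ (⊤ : ℕ∞) φ (Metric.ball 0 R))
    (hφ0 : ∀ v : Csq, ‖v‖ ≤ R → ‖φ v - v‖ ≤ C * ‖v‖ ^ 2)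
    (hφ1 : ∀ v : Csq, ‖v‖ ≤ R →
      ‖fderiv ℝ φ v - ContinuousLinearMap.id ℝ Csq‖ ≤ C * ‖v‖)
    (β : ℝ → ℝ) (hβsmooth : ContDiff ℝ (⊤ : ℕ∞) β)
    (hβ01 : ∀ r : ℝ, 0 ≤ β r ∧ β r ≤ 1)
    (hβ0 : ∀ r : ℝ, r ≤ 1/3 → β r = 0)
    (hβ1 : ∀ r : ℝ, 1 ≤ r → β r = 1)
    (hβ' : ∀ r : ℝ, |deriv β r| ≤ 2)
    (φ' : Csq → Csq)
    (hφ' : ∀ v : Csq, φ' v = v + β (‖v‖ / δ) • (φ v - v)) :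
    -- (i) φ' is smooth on the ball of radius R
    ContDiffOn ℝ (⊤ : ℕ∞) φ' (Metric.ball 0 R) ∧
    -- (ii) φ' = φ on the region δ ≤ ‖v‖ ≤ R
    (∀ v : Csq, δ ≤ ‖v‖ → ‖v‖ ≤ R → φ' v = φ v) ∧
    -- (iii) φ' = id on the ball of radius δ/3, in particular holomorphic there
    (∀ v : Csq, ‖v‖ ≤ δ/3 → φ' v = v) ∧
    DifferentiableOn ℂ φ' (Metric.ball 0 (δ/3)) ∧
    -- (iv) the C¹-distance between φ' and φ is at most (3 + δ)·C·δ
    (∀ v : Csq, ‖v‖ ≤ R →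
      ‖φ' v - φ v‖ + ‖fderiv ℝ φ' v - fderiv ℝ φ v‖ ≤ (3 + δ) * C * δ) ∧
    -- (v) if φ preserves the slice ℂ × {0}, then so does φ'
    ((∀ v : Csq, v ∈ Metric.ball (0 : Csq) R → v 1 = 0 → φ v 1 = 0) →
      (∀ v : Csq, v ∈ Metric.ball (0 : Csq) R → v 1 = 0 → φ' v 1 = 0)) := by
  let : InnerProductSpace ℝ Csq := InnerProductSpace.rclikeToReal ℂ Csq
  obtain ⟨hsmooth, houter, hinner, hdist, hconvex⟩ := cutoff_interpolation_general
    (φ₀ := id) (φ' := φ') hC.le hδ (by norm_num) (by simp) (Metric.ball_subset_ball hδR)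
    contDiff_id hφsmooth (fun v hv => hφ0 v (hv.le.trans hδR))
    (fun v hv => by simpa using hφ1 v (hv.le.trans hδR)) hβsmooth hβ01 hβ0 hβ1 hβ'
    (fun v => by simp [hφ' v, lineMap_apply_module', add_comm])
  replace hinner : ∀ v, ‖v‖ ≤ δ / 3 → φ' v = v := fun v hv => hinner v (by linarith)
  refine ⟨hsmooth, fun v hv _ => houter v hv, hinner,
    differentiableOn_id.congr fun v hv => hinner v (mem_ball_zero_iff.1 hv).le,
    fun v _ => (hdist v).trans_eq (by ring), fun hφ v hv hv₁ => ?_⟩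
  have hslice : Convex ℝ {w : Csq | w 1 = 0} := fun x hx y hy s t _ _ _ => by simp_all
  exact hconvex _ hslice v hv₁ (hφ v hv hv₁)
end
end

section
/- Let T² = (ℝ × ℝ)/(ℤ × ℤ) be the quotient additive group, with quotient map π : ℝ × ℝ → T², and let τ₁ : T² → T² be the translation p ↦ p + π(1/2, 0). Let a, b, c, d be integers with a·d − b·c = 1, let A be the matrix !![a, b; c, d] ∈ SL(2,ℤ), and let Ā : T² → T² be the map induced on the quotient by the linear action of A on ℝ² (which preserves ℤ × ℤ). Then: (i) for every p ∈ T², Ā⁻¹(τ₁(Ā(τ₁(p)))) = p + π((d+1)/2, −c/2); (ii) the map Ā⁻¹ ∘ τ₁ ∘ Ā ∘ τ₁ is the identity map of T² if and only if c is even; and (iii) if c is odd, then Ā⁻¹ ∘ τ₁ ∘ Ā ∘ τ₁ is an involution of T² with no fixed points. -/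
/-- The lattice `ℤ × ℤ` inside `ℝ × ℝ`. -/
noncomputable def latticeZ2 : AddSubgroup (ℝ × ℝ) :=
  (AddSubgroup.zmultiples (1 : ℝ)).prod (AddSubgroup.zmultiples (1 : ℝ))

/-- The 2-torus `T² = (ℝ × ℝ)/(ℤ × ℤ)`. -/
abbrev Torus2 : Type := (ℝ × ℝ) ⧸ latticeZ2

/-- The quotient map `π : ℝ × ℝ → T²`. -/
noncomputable def torusPi : ℝ × ℝ →+ Torus2 := QuotientAddGroup.mk' latticeZ2

/-- The translation `τ₁ : p ↦ p + π(1/2, 0)` of the torus. -/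
noncomputable def tau1 (p : Torus2) : Torus2 := p + torusPi (1/2, 0)

/-!
Since `Ā` is additive, conjugating `τ₁` by it gives the translation by `Ā⁻¹ π(1/2, 0)`, so
everything takes place among the points `π(m/2, n/2)`, on which `Ā` acts through the reduction of
`A` modulo 2. Injectivity of `Ā` forces `det A` to be odd, whence `A (d, -c) = (det A, 0)` gives
`Ā⁻¹ π(1/2, 0) = π(d/2, -c/2)`. If `c` is even, then `a * d` is odd, so `d + 1` is even too.
-/

theorem torusPi_surjective : Function.Surjective torusPi :=
  QuotientAddGroup.mk'_surjective latticeZ2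

theorem torusPi_eq_zero_iff {x y : ℝ} :
    torusPi (x, y) = 0 ↔ (∃ m : ℤ, (m : ℝ) = x) ∧ ∃ n : ℤ, (n : ℝ) = y := by
  rw [torusPi, QuotientAddGroup.mk'_apply, QuotientAddGroup.eq_zero_iff]
  simp [latticeZ2, AddSubgroup.mem_prod, AddSubgroup.mem_zmultiples_iff]

theorem exists_intCast_eq_div_two_iff {k : ℤ} : (∃ m : ℤ, (m : ℝ) = (k : ℝ) / 2) ↔ Even k := by
  rw [even_iff_exists_two_mul]
  refine exists_congr fun m => ?_
  rw [eq_div_iff two_ne_zero, mul_comm, eq_comm]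
  norm_cast

/-- The parametrization `(m, n) ↦ π(m/2, n/2)` of the 2-torsion points of the torus. -/
noncomputable def halfPoint : ℤ × ℤ →+ Torus2 :=
  AddMonoidHom.mk' (fun v => torusPi ((v.1 : ℝ) / 2, (v.2 : ℝ) / 2)) fun v w => by
    simp only [← map_add, Prod.mk_add_mk, Prod.fst_add, Prod.snd_add, Int.cast_add, add_div]

theorem halfPoint_apply (m n : ℤ) : halfPoint (m, n) = torusPi ((m : ℝ) / 2, (n : ℝ) / 2) :=
  rfl

theorem halfPoint_eq_zero_iff {m n : ℤ} : halfPoint (m, n) = 0 ↔ Even m ∧ Even n := by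
  rw [halfPoint_apply, torusPi_eq_zero_iff, exists_intCast_eq_div_two_iff,
    exists_intCast_eq_div_two_iff]

theorem halfPoint_add_self (v : ℤ × ℤ) : halfPoint v + halfPoint v = 0 := by
  rw [← map_add]
  exact halfPoint_eq_zero_iff.mpr ⟨Even.add_self v.1, Even.add_self v.2⟩

theorem tau1_eq_add_halfPoint (p : Torus2) : tau1 p = p + halfPoint (1, 0) := by
  simp [tau1, halfPoint_apply]

theorem even_add_one_and_even_neg_iff_of_odd_det {a b c d : ℤ} (hdet : Odd (a * d - b * c)) :
    Even (d + 1) ∧ Even (-c) ↔ Even c := by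
  rw [even_neg, and_iff_right_iff_imp]
  intro hc
  have had : Odd (a * d) := by simpa using hdet.add_even (hc.mul_left b)
  exact (Int.odd_mul.mp had).2.add_one

theorem induced_map_add {a b c d : ℝ} {f : Torus2 → Torus2}
    (hf : ∀ x y : ℝ, f (torusPi (x, y)) = torusPi (a * x + b * y, c * x + d * y))
    (p q : Torus2) : f (p + q) = f p + f q := by
  obtain ⟨⟨x, y⟩, rfl⟩ := torusPi_surjective p
  obtain ⟨⟨x', y'⟩, rfl⟩ := torusPi_surjective q
  rw [← map_add, Prod.mk_add_mk, hf, hf, hf, ← map_add, Prod.mk_add_mk]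
  congr 2 <;> ring

section InducedMap

variable {a b c d : ℤ} {f : Torus2 → Torus2}
  (hf : ∀ x y : ℝ,
    f (torusPi (x, y)) = torusPi ((a : ℝ) * x + (b : ℝ) * y, (c : ℝ) * x + (d : ℝ) * y))

include hf

theorem induced_map_halfPoint (m n : ℤ) :
    f (halfPoint (m, n)) = halfPoint (a * m + b * n, c * m + d * n) := by
  rw [halfPoint_apply, hf, halfPoint_apply]
  congr 2 <;> push_cast <;> ring

theorem even_and_even_of_induced_injective (hinj : Function.Injective f) {m n : ℤ}
    (h₁ : Even (a * m + b * n)) (h₂ : Even (c * m + d * n)) : Even m ∧ Even n := by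
  have map_zero : f 0 = 0 := by simpa using induced_map_add hf 0 0
  rw [← halfPoint_eq_zero_iff]
  apply hinj
  rw [induced_map_halfPoint hf, map_zero, halfPoint_eq_zero_iff]
  exact ⟨h₁, h₂⟩

/-- An even determinant would make the columns `(d, -c)` and `(-b, a)` of the adjugate vanish
modulo 2, and then `(1, 0)` would lie in the kernel of `A` modulo 2. -/
theorem odd_det_of_induced_injective (hinj : Function.Injective f) : Odd (a * d - b * c) := by
  by_contra hdet
  rw [Int.not_odd_iff_even] at hdet
  have even_d_c : Even d ∧ Even (-c) :=
    even_and_even_of_induced_injective hf hinj (by rwa [mul_neg, ← sub_eq_add_neg]) ⟨0, by ring⟩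
  have even_b_a : Even (-b) ∧ Even a :=
    even_and_even_of_induced_injective hf hinj ⟨0, by ring⟩ (by convert hdet using 1; ring)
  have even_one : Even (1 : ℤ) ∧ Even (0 : ℤ) :=
    even_and_even_of_induced_injective hf hinj (by simpa using even_b_a.2)
      (by simpa using even_d_c.2)
  exact Int.not_even_one even_one.1

theorem induced_map_halfPoint_adjugate (hdet : Odd (a * d - b * c)) :
    f (halfPoint (d, -c)) = halfPoint (1, 0) := by
  rw [induced_map_halfPoint hf, ← sub_eq_zero, ← map_sub, Prod.mk_sub_mk, halfPoint_eq_zero_iff]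
  refine ⟨?_, ⟨0, by ring⟩⟩
  have det_sub_one_even : Even (a * d - b * c - 1) := hdet.sub_odd odd_one
  convert det_sub_one_even using 2
  ring

end InducedMap

theorem symm_tau1_map_tau1 {a b c d : ℤ} {Abar : Torus2 ≃ Torus2}
    (hAbar : ∀ x y : ℝ,
      Abar (torusPi (x, y)) = torusPi ((a : ℝ) * x + (b : ℝ) * y, (c : ℝ) * x + (d : ℝ) * y))
    (p : Torus2) :
    Abar.symm (tau1 (Abar (tau1 p))) = p + halfPoint (d + 1, -c) := by
  have odd_det := odd_det_of_induced_injective hAbar Abar.injective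
  have split : halfPoint (d + 1, -c) = halfPoint (1, 0) + halfPoint (d, -c) := by
    rw [← map_add, Prod.mk_add_mk, add_comm d, zero_add]
  rw [Equiv.symm_apply_eq, split, ← add_assoc, ← tau1_eq_add_halfPoint, induced_map_add hAbar,
    induced_map_halfPoint_adjugate hAbar odd_det, tau1_eq_add_halfPoint (Abar _)]

theorem isotinv_computation_general
    (a b c d : ℤ) (Abar : Torus2 ≃ Torus2)
    (hAbar : ∀ x y : ℝ,
      Abar (torusPi (x, y)) = torusPi ((a : ℝ) * x + (b : ℝ) * y, (c : ℝ) * x + (d : ℝ) * y)) :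
    (∀ p : Torus2,
      Abar.symm (tau1 (Abar (tau1 p))) = p + torusPi (((d : ℝ) + 1) / 2, -(c : ℝ) / 2)) ∧
    ((∀ p : Torus2, Abar.symm (tau1 (Abar (tau1 p))) = p) ↔ Even c) ∧
    (Odd c →
      Function.Involutive (fun p : Torus2 => Abar.symm (tau1 (Abar (tau1 p)))) ∧
      ∀ p : Torus2, Abar.symm (tau1 (Abar (tau1 p))) ≠ p) := by
  have translation := symm_tau1_map_tau1 hAbar
  have odd_det := odd_det_of_induced_injective hAbar Abar.injective
  have fixed_iff (p : Torus2) : Abar.symm (tau1 (Abar (tau1 p))) = p ↔ Even c := by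
    rw [translation, add_eq_left, halfPoint_eq_zero_iff]
    exact even_add_one_and_even_neg_iff_of_odd_det odd_det
  refine ⟨fun p => ?_, ?_, fun hc => ⟨fun p => ?_, fun p => ?_⟩⟩
  · simpa [halfPoint_apply] using translation p
  · simp only [fixed_iff, forall_const]
  · simp only [translation, add_assoc, halfPoint_add_self, add_zero]
  · rwa [Ne, fixed_iff, Int.not_even_iff_odd]

/-- The core computation in the proof of Lemma 3.7 ("isotinv") of the paper: for
`A = !![a, b; c, d] ∈ SL(2,ℤ)` inducing `Ā` on `T² = (ℝ × ℝ)/(ℤ × ℤ)` and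
`τ₁ : p ↦ p + π(1/2, 0)`, the composite `Ā⁻¹ ∘ τ₁ ∘ Ā ∘ τ₁` is translation by
`π((d+1)/2, −c/2)`; it is the identity iff `c` is even, and a free involution if
`c` is odd. -/
theorem isotinv_computation
    (a b c d : ℤ) (hdet : a * d - b * c = 1)
    (Abar : Torus2 ≃ Torus2)
    (hAbar : ∀ x y : ℝ,
      Abar (torusPi (x, y)) = torusPi ((a : ℝ) * x + (b : ℝ) * y, (c : ℝ) * x + (d : ℝ) * y)) :
    -- (i) the composite is translation by π((d+1)/2, −c/2)
    (∀ p : Torus2,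
      Abar.symm (tau1 (Abar (tau1 p))) = p + torusPi (((d : ℝ) + 1) / 2, -(c : ℝ) / 2)) ∧
    -- (ii) the composite is the identity iff c is even
    ((∀ p : Torus2, Abar.symm (tau1 (Abar (tau1 p))) = p) ↔ Even c) ∧
    -- (iii) if c is odd the composite is a fixed-point-free involution
    (Odd c →
      Function.Involutive (fun p : Torus2 => Abar.symm (tau1 (Abar (tau1 p)))) ∧
      ∀ p : Torus2, Abar.symm (tau1 (Abar (tau1 p))) ≠ p) :=
  isotinv_computation_general a b c d Abar hAbar
end

section
/- For any integer j, let P_j be the group with presentation ⟨α, β, m ∣ α⁻¹mα = m⁻¹, βm = mβ, αβα⁻¹β⁻¹ = m^j⟩. Then there exists a group automorphism φ of P_j with φ(α) = α, φ(β) = β·m^j, and φ(m) = m⁻¹; that is, the elements α, β·m^j, m⁻¹ generate P_j and satisfy the same defining relations. -/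
/-- Generators `α`, `β`, `m` of the group `P_j`. -/
inductive AnnGen : Type
  | a : AnnGen  -- α
  | b : AnnGen  -- β
  | m : AnnGen  -- m

open FreeGroup in
/-- The relators of the presentation
`P_j = ⟨α, β, m ∣ α⁻¹mα = m⁻¹, βm = mβ, αβα⁻¹β⁻¹ = m^j⟩`. -/
def annulusRels (j : ℤ) : Set (FreeGroup AnnGen) :=
  { (of AnnGen.a)⁻¹ * of AnnGen.m * of AnnGen.a * of AnnGen.m,
    of AnnGen.b * of AnnGen.m * (of AnnGen.b)⁻¹ * (of AnnGen.m)⁻¹,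
    of AnnGen.a * of AnnGen.b * (of AnnGen.a)⁻¹ * (of AnnGen.b)⁻¹ * (of AnnGen.m) ^ (-j) }

/-- The group `P_j`, the fundamental group of the orientable annulus bundle `Y_j` over
the torus with a single boundary component (equation (annpi1) of the paper). -/
abbrev AnnGroup (j : ℤ) : Type := PresentedGroup (annulusRels j)

/-! The automorphism is conjugation by `α`: the first relation says that conjugation by `α⁻¹`,
hence also by `α`, inverts `m`, and the third gives `αβα⁻¹ = m^j β`, which is `β m^j` because `β`
commutes with `m`. -/

section Group

open scoped commutatorElement

variable {G : Type*} [Group G] {a b c m : G}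

theorem conj_eq_inv_of_inv_conj_eq_inv (h : a⁻¹ * m * a = m⁻¹) : a * m * a⁻¹ = m⁻¹ := by
  have semiconj_inv : SemiconjBy a⁻¹ m m⁻¹ := eq_mul_inv_of_mul_eq h
  have semiconj : SemiconjBy a m m⁻¹ := by
    simpa only [inv_inv] using semiconj_inv.inv_symm_left.inv_right
  exact mul_inv_eq_of_eq_mul semiconj

theorem conj_eq_mul_of_commutatorElement_eq (h : ⁅a, b⁆ = c) (hbc : Commute b c) :
    a * b * a⁻¹ = b * c :=
  calc
    a * b * a⁻¹ = ⁅a, b⁆ * b := by rw [commutatorElement_def, inv_mul_cancel_right]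
    _ = b * c := by rw [h, hbc.eq]

theorem annulus_group_automorphism_flip_general {j : ℤ} (ham : a⁻¹ * m * a = m⁻¹)
    (hbm : Commute b m) (hab : ⁅a, b⁆ = m ^ j) :
    MulAut.conj a a = a ∧ MulAut.conj a b = b * m ^ j ∧ MulAut.conj a m = m⁻¹ :=
  ⟨mul_inv_cancel_right a a, conj_eq_mul_of_commutatorElement_eq hab (hbm.zpow_right j),
    conj_eq_inv_of_inv_conj_eq_inv ham⟩

end Group

namespace AnnGroup

open PresentedGroup (of one_of_mem)
open scoped commutatorElement

variable (j : ℤ)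

theorem inv_a_mul_m_mul_a :
    (of AnnGen.a)⁻¹ * of AnnGen.m * of AnnGen.a = (of AnnGen.m : AnnGroup j)⁻¹ :=
  eq_inv_of_mul_eq_one_left (one_of_mem (rels := annulusRels j) (Or.inl rfl))

theorem commute_b_m : Commute (of AnnGen.b : AnnGroup j) (of AnnGen.m) :=
  commutatorElement_eq_one_iff_commute.mp
    (one_of_mem (rels := annulusRels j) (Or.inr (Or.inl rfl)))

theorem commutatorElement_a_b :
    ⁅(of AnnGen.a : AnnGroup j), (of AnnGen.b : AnnGroup j)⁆ = of AnnGen.m ^ j := by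
  have relator :
      ⁅(of AnnGen.a : AnnGroup j), (of AnnGen.b : AnnGroup j)⁆ * of AnnGen.m ^ (-j) = 1 :=
    one_of_mem (rels := annulusRels j) (Or.inr (Or.inr rfl))
  rwa [zpow_neg, mul_inv_eq_one] at relator

end AnnGroup

/-- There is an automorphism of `P_j` sending `α ↦ α`, `β ↦ β·m^j`, `m ↦ m⁻¹`. -/
theorem annulus_group_automorphism_flip (j : ℤ) :
    ∃ φ : AnnGroup j ≃* AnnGroup j,
      φ (PresentedGroup.of AnnGen.a) = PresentedGroup.of AnnGen.a ∧
      φ (PresentedGroup.of AnnGen.b)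
        = PresentedGroup.of AnnGen.b * (PresentedGroup.of AnnGen.m : AnnGroup j) ^ j ∧
      φ (PresentedGroup.of AnnGen.m) = (PresentedGroup.of AnnGen.m : AnnGroup j)⁻¹ :=
  ⟨MulAut.conj (PresentedGroup.of AnnGen.a), annulus_group_automorphism_flip_general
    (AnnGroup.inv_a_mul_m_mul_a j) (AnnGroup.commute_b_m j) (AnnGroup.commutatorElement_a_b j)⟩
end

section
/- For any integer j, let P_j be the group with presentation ⟨α, β, m ∣ α⁻¹mα = m⁻¹, βm = mβ, αβα⁻¹β⁻¹ = m^j⟩. Let p, q, r, s, t be integers with p·s − q·r = 1, q even, and s = 2t + 1. Then there exists a group automorphism φ of P_j with φ(α) = α^p·β^r, φ(β) = α^q·β^s·m^{j·t}, and φ(m) = m. -/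
/-!
The relations of `P_j` make `α²` central and make `α²`, `β`, `m` commute, so the words
`α^(2x) β^y m^z` form an abelian subgroup of index two on which conjugation by `α` acts by
`z ↦ j y - z`. The words `α^(2u+1) β^r m^k`, `α^(2v) β^(2t+1) m^(j t)`, `m` again satisfy the
relations, hence define an endomorphism. Substituting such words into one another multiplies the
matrices `(2u+1 2v; r 2t+1)` and changes the exponent `k` by an explicit translation, so a matrix of
determinant `±1` gives an automorphism, whose inverse comes from the inverse matrix.
-/

/-- The defining relations of `P_j`, for elements `a`, `b`, `m` of an arbitrary group. Here
`SemiconjBy a x y` encodes `a * x * a⁻¹ = y`. -/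
structure AnnRelations {G : Type*} [Group G] (j : ℤ) (a b m : G) : Prop where
  semiconjBy_a_m : SemiconjBy a m m⁻¹
  commute_b_m : Commute b m
  semiconjBy_a_b : SemiconjBy a b (m ^ j * b)

/-- The word `a ^ (2 * x) * b ^ y * m ^ z`: under `AnnRelations`, the general element of the
abelian subgroup generated by `a ^ 2`, `b` and `m`. The first parameter is half the exponent of
`a`. -/
def evenWord {G : Type*} [Group G] (a b m : G) (x y z : ℤ) : G :=
  a ^ (2 * x) * b ^ y * m ^ z

theorem mul_evenWord {G : Type*} [Group G] (a b m : G) (x y z : ℤ) :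
    a * evenWord a b m x y z = a ^ (2 * x + 1) * b ^ y * m ^ z := by
  simp only [evenWord, add_comm (2 * x), zpow_one_add, mul_assoc]

theorem map_evenWord {G H : Type*} [Group G] [Group H] (f : G →* H) (a b m : G) (x y z : ℤ) :
    f (evenWord a b m x y z) = evenWord (f a) (f b) (f m) x y z := by
  simp only [evenWord, map_mul, map_zpow]

namespace AnnRelations

variable {G : Type*} [Group G] {j : ℤ} {a b m : G}

theorem commute_zpow_two_mul_m (h : AnnRelations j a b m) (x : ℤ) : Commute (a ^ (2 * x)) m := by
  have hback : SemiconjBy a m⁻¹ m := by simpa only [inv_inv] using h.semiconjBy_a_m.inv_right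
  have hsq : Commute (a * a) m := hback.mul_left h.semiconjBy_a_m
  rw [zpow_mul, zpow_two]
  exact hsq.zpow_left x

theorem commute_zpow_two_mul_b (h : AnnRelations j a b m) (x : ℤ) : Commute (a ^ (2 * x)) b := by
  have hback : SemiconjBy a (m ^ j * b) b := by
    simpa using (h.semiconjBy_a_m.zpow_right j).mul_right h.semiconjBy_a_b
  have hsq : Commute (a * a) b := hback.mul_left h.semiconjBy_a_b
  rw [zpow_mul, zpow_two]
  exact hsq.zpow_left x

theorem commute_zpow_two_mul_mul_zpow_m (h : AnnRelations j a b m) (x y : ℤ) :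
    Commute (a ^ (2 * x) * b ^ y) m :=
  (h.commute_zpow_two_mul_m x).mul_left (h.commute_b_m.zpow_left y)

theorem commute_evenWord_m (h : AnnRelations j a b m) (x y z : ℤ) :
    Commute (evenWord a b m x y z) m :=
  (h.commute_zpow_two_mul_mul_zpow_m x y).mul_left (Commute.zpow_self m z)

theorem evenWord_mul (h : AnnRelations j a b m) (x y z x' y' z' : ℤ) :
    evenWord a b m x y z * evenWord a b m x' y' z' =
      evenWord a b m (x + x') (y + y') (z + z') := by
  have hm : Commute (m ^ z) (a ^ (2 * x') * b ^ y') :=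
    ((h.commute_zpow_two_mul_mul_zpow_m x' y').zpow_right z).symm
  have hb : Commute (b ^ y) (a ^ (2 * x')) := ((h.commute_zpow_two_mul_b x').zpow_right y).symm
  simp only [evenWord, mul_add, zpow_add]
  rw [hm.mul_mul_mul_comm, hb.mul_mul_mul_comm]

theorem evenWord_zpow (h : AnnRelations j a b m) (x y z n : ℤ) :
    evenWord a b m x y z ^ n = evenWord a b m (x * n) (y * n) (z * n) := by
  have hm : Commute (a ^ (2 * x) * b ^ y) (m ^ z) :=
    (h.commute_zpow_two_mul_mul_zpow_m x y).zpow_right z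
  have hb : Commute (a ^ (2 * x)) (b ^ y) := (h.commute_zpow_two_mul_b x).zpow_right y
  rw [evenWord, hm.mul_zpow, hb.mul_zpow, ← zpow_mul, ← zpow_mul, ← zpow_mul, mul_assoc 2,
    evenWord]

theorem commute_evenWord (h : AnnRelations j a b m) (x y z x' y' z' : ℤ) :
    Commute (evenWord a b m x y z) (evenWord a b m x' y' z') := by
  rw [commute_iff_eq, h.evenWord_mul, h.evenWord_mul, add_comm x, add_comm y, add_comm z]

theorem m_zpow_mul_evenWord (h : AnnRelations j a b m) (n x y z : ℤ) :
    m ^ n * evenWord a b m x y z = evenWord a b m x y (n + z) := by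
  rw [← ((h.commute_evenWord_m x y z).zpow_right n).eq, add_comm n]
  simp only [evenWord, zpow_add, mul_assoc]

theorem semiconjBy_a_evenWord (h : AnnRelations j a b m) (x y z : ℤ) :
    SemiconjBy a (evenWord a b m x y z) (evenWord a b m x y (j * y - z)) := by
  have ha : SemiconjBy a (a ^ (2 * x)) (a ^ (2 * x)) := Commute.self_zpow a (2 * x)
  have hb : SemiconjBy a (b ^ y) (b ^ y * m ^ (j * y)) := by
    have hpow := h.semiconjBy_a_b.zpow_right y
    rwa [← (h.commute_b_m.zpow_right j).eq, (h.commute_b_m.zpow_right j).mul_zpow,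
      ← zpow_mul] at hpow
  have hm : SemiconjBy a (m ^ z) (m ^ (-z)) := by simpa using h.semiconjBy_a_m.zpow_right z
  simpa only [evenWord, sub_eq_add_neg, zpow_add, mul_assoc] using
    (ha.mul_right hb).mul_right hm

theorem a_mul_evenWord_mul_self (h : AnnRelations j a b m) (u r k : ℤ) :
    a * evenWord a b m u r k * (a * evenWord a b m u r k) =
      evenWord a b m (2 * u + 1) (2 * r) (j * r) := by
  have hmove : evenWord a b m u r k * a = a * evenWord a b m u r (j * r - k) := by
    simpa using (h.semiconjBy_a_evenWord u r (j * r - k)).eq.symm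
  have hsq : a * a = evenWord a b m 1 0 0 := by simp [evenWord, pow_two]
  calc
    _ = a * (evenWord a b m u r k * a) * evenWord a b m u r k := by simp only [mul_assoc]
    _ = a * a * (evenWord a b m u r (j * r - k) * evenWord a b m u r k) := by
      rw [hmove]; simp only [mul_assoc]
    _ = _ := by
      rw [hsq, h.evenWord_mul, h.evenWord_mul]
      congr 1 <;> ring

theorem evenWord_basisChange (h : AnnRelations j a b m) (u v r t k x y z : ℤ) :
    evenWord (a * evenWord a b m u r k) (evenWord a b m v (2 * t + 1) (j * t)) m x y z =
      evenWord a b m ((2 * u + 1) * x + v * y) (2 * r * x + (2 * t + 1) * y)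
        (j * (r * x + t * y) + z) := by
  have hm : m ^ z = evenWord a b m 0 0 z := by simp [evenWord]
  rw [evenWord, zpow_mul, zpow_two, h.a_mul_evenWord_mul_self, h.evenWord_zpow, h.evenWord_zpow, hm,
    h.evenWord_mul, h.evenWord_mul]
  congr 1 <;> ring

theorem basisChange (h : AnnRelations j a b m) (u v r t k : ℤ) :
    AnnRelations j (a * evenWord a b m u r k) (evenWord a b m v (2 * t + 1) (j * t)) m where
  semiconjBy_a_m := h.semiconjBy_a_m.mul_left (h.commute_evenWord_m u r k)
  commute_b_m := h.commute_evenWord_m v (2 * t + 1) (j * t)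
  semiconjBy_a_b := by
    have hexp : j * (2 * t + 1) - j * t = j + j * t := by ring
    rw [h.m_zpow_mul_evenWord, ← hexp]
    exact (h.semiconjBy_a_evenWord _ _ _).mul_left (h.commute_evenWord _ _ _ _ _ _)

end AnnRelations

namespace AnnGroup

theorem relations (j : ℤ) :
    AnnRelations j (PresentedGroup.of AnnGen.a : AnnGroup j)
      (PresentedGroup.of AnnGen.b) (PresentedGroup.of AnnGen.m) where
  semiconjBy_a_m := by
    have hrel := PresentedGroup.one_of_mem (rels := annulusRels j) (Or.inl rfl)
    simp only [map_mul, map_inv, mul_assoc, inv_mul_eq_one] at hrel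
    exact eq_inv_mul_of_mul_eq hrel.symm
  commute_b_m := by
    have hrel := PresentedGroup.one_of_mem (rels := annulusRels j) (Or.inr (Or.inl rfl))
    simp only [map_mul, map_inv] at hrel
    rwa [mul_inv_eq_one, mul_inv_eq_iff_eq_mul] at hrel
  semiconjBy_a_b := by
    have hrel := PresentedGroup.one_of_mem (rels := annulusRels j) (Or.inr (Or.inr rfl))
    simp only [map_mul, map_inv, map_zpow, zpow_neg] at hrel
    rwa [mul_inv_eq_one, mul_inv_eq_iff_eq_mul, mul_inv_eq_iff_eq_mul] at hrel

section Lift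

variable {G : Type*} [Group G] {j : ℤ} {a b m : G}

/-- The universal property of `P_j`: the homomorphism determined by a triple satisfying the
defining relations. -/
def lift (h : AnnRelations j a b m) : AnnGroup j →* G :=
  PresentedGroup.toGroup (f := fun | .a => a | .b => b | .m => m) <| by
    rintro w (rfl | rfl | rfl)
    · simp [mul_assoc, h.semiconjBy_a_m.eq]
    · simp [h.commute_b_m.eq]
    · simp [h.semiconjBy_a_b.eq]

@[simp]
theorem lift_of_a (h : AnnRelations j a b m) : lift h (PresentedGroup.of .a) = a :=
  PresentedGroup.toGroup.of _

@[simp]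
theorem lift_of_b (h : AnnRelations j a b m) : lift h (PresentedGroup.of .b) = b :=
  PresentedGroup.toGroup.of _

@[simp]
theorem lift_of_m (h : AnnRelations j a b m) : lift h (PresentedGroup.of .m) = m :=
  PresentedGroup.toGroup.of _

end Lift

/-- The endomorphism `α ↦ α^(2u+1) β^r m^k`, `β ↦ α^(2v) β^(2t+1) m^(j t)`, `m ↦ m` of `P_j`,
attached to the matrix `(2u+1 2v; r 2t+1)` and the integer `k`. -/
def basisChange (j u v r t k : ℤ) : AnnGroup j →* AnnGroup j :=
  lift ((relations j).basisChange u v r t k)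

@[simp]
theorem basisChange_of_a (j u v r t k : ℤ) :
    basisChange j u v r t k (PresentedGroup.of .a) =
      PresentedGroup.of .a * evenWord (PresentedGroup.of .a) (PresentedGroup.of .b)
        (PresentedGroup.of .m) u r k :=
  lift_of_a _

@[simp]
theorem basisChange_of_b (j u v r t k : ℤ) :
    basisChange j u v r t k (PresentedGroup.of .b) =
      evenWord (PresentedGroup.of .a) (PresentedGroup.of .b) (PresentedGroup.of .m)
        v (2 * t + 1) (j * t) :=
  lift_of_b _

@[simp]
theorem basisChange_of_m (j u v r t k : ℤ) :
    basisChange j u v r t k (PresentedGroup.of .m) = PresentedGroup.of .m :=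
  lift_of_m _

theorem basisChange_zero (j : ℤ) : basisChange j 0 0 0 0 0 = MonoidHom.id (AnnGroup j) := by
  ext x
  cases x <;> simp [evenWord]

theorem basisChange_comp (j u v r t k u' v' r' t' k' : ℤ) :
    (basisChange j u v r t k).comp (basisChange j u' v' r' t' k') =
      basisChange j (u + ((2 * u + 1) * u' + v * r')) ((2 * u + 1) * v' + v * (2 * t' + 1))
        (r + (2 * r * u' + (2 * t + 1) * r')) (r * v' + t * (2 * t' + 1) + t')
        (k + (j * (r * u' + t * r') + k')) := by
  ext x
  cases x
  case a =>
    simp only [MonoidHom.comp_apply, basisChange_of_a, basisChange_of_b, basisChange_of_m, map_mul,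
      map_evenWord, (relations j).evenWord_basisChange, mul_assoc, (relations j).evenWord_mul]
  case b =>
    simp only [MonoidHom.comp_apply, basisChange_of_a, basisChange_of_b, basisChange_of_m,
      map_evenWord, (relations j).evenWord_basisChange]
    congr 1 <;> ring
  case m => simp only [MonoidHom.comp_apply, basisChange_of_m]

theorem exists_mulEquiv_coe_eq_basisChange {u v r t : ℤ} (j k : ℤ)
    (hdet : IsUnit ((2 * u + 1) * (2 * t + 1) - 2 * v * r)) :
    ∃ φ : AnnGroup j ≃* AnnGroup j, (φ : AnnGroup j →* AnnGroup j) = basisChange j u v r t k := by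
  suffices ∃ g, g.comp (basisChange j u v r t k) = MonoidHom.id _ ∧
      (basisChange j u v r t k).comp g = MonoidHom.id _ by
    obtain ⟨g, hleft, hright⟩ := this
    exact ⟨MonoidHom.toMulEquiv _ g hleft hright, rfl⟩
  rcases Int.isUnit_iff.mp hdet with hone | hneg
  · refine ⟨basisChange j t (-v) (-r) u (-k), ?_, ?_⟩ <;>
      rw [basisChange_comp, ← basisChange_zero] <;> congr 1 <;> linarith
  -- The inverse matrix is now `-(2t+1 -2v; -r 2u+1)`, and `-(2t+1) = 2(-t-1) + 1`.
  · refine ⟨basisChange j (-t - 1) v r (-u - 1) (j * r - k), ?_, ?_⟩ <;>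
      rw [basisChange_comp, ← basisChange_zero] <;> congr 1 <;> linarith

end AnnGroup

theorem annulus_group_automorphism_basis_change_general (j p q r s t k : ℤ)
    (hdet : IsUnit (p * s - q * r)) (hq : Even q) (hs : s = 2 * t + 1) :
    ∃ φ : AnnGroup j ≃* AnnGroup j,
      φ (PresentedGroup.of AnnGen.a)
        = (PresentedGroup.of AnnGen.a : AnnGroup j) ^ p
          * (PresentedGroup.of AnnGen.b : AnnGroup j) ^ r
          * (PresentedGroup.of AnnGen.m : AnnGroup j) ^ k ∧
      φ (PresentedGroup.of AnnGen.b)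
        = (PresentedGroup.of AnnGen.a : AnnGroup j) ^ q
          * (PresentedGroup.of AnnGen.b : AnnGroup j) ^ s
          * (PresentedGroup.of AnnGen.m : AnnGroup j) ^ (j * t) ∧
      φ (PresentedGroup.of AnnGen.m) = (PresentedGroup.of AnnGen.m : AnnGroup j) := by
  have hp : Odd p := by
    have hodd : Odd (p * s - q * r) := by
      rcases Int.isUnit_iff.mp hdet with hone | hneg
      · exact hone ▸ odd_one
      · exact hneg ▸ odd_neg_one
    have hps : Odd (p * s) := by simpa using hodd.add_even (hq.mul_right r)
    exact (Int.odd_mul.mp hps).1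
  obtain ⟨u, rfl⟩ := hp
  obtain ⟨v, rfl⟩ := hq.two_dvd
  subst hs
  obtain ⟨φ, hφ⟩ := AnnGroup.exists_mulEquiv_coe_eq_basisChange j k hdet
  have happly (g : AnnGroup j) : φ g = AnnGroup.basisChange j u v r t k g := DFunLike.congr_fun hφ g
  refine ⟨φ, ?_, ?_, ?_⟩
  · rw [happly, AnnGroup.basisChange_of_a, mul_evenWord]
  · rw [happly, AnnGroup.basisChange_of_b, evenWord]
  · rw [happly, AnnGroup.basisChange_of_m]

/-- For `(p q; r s) ∈ SL(2,ℤ)` with `q` even and `s = 2t+1`, there is an automorphism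
of `P_j` sending `α ↦ α^p β^r`, `β ↦ α^q β^s m^{jt}`, `m ↦ m`. -/
theorem annulus_group_automorphism_basis_change (j p q r s t : ℤ)
    (hdet : p * s - q * r = 1) (hq : Even q) (hs : s = 2 * t + 1) :
    ∃ φ : AnnGroup j ≃* AnnGroup j,
      φ (PresentedGroup.of AnnGen.a)
        = (PresentedGroup.of AnnGen.a : AnnGroup j) ^ p
          * (PresentedGroup.of AnnGen.b : AnnGroup j) ^ r ∧
      φ (PresentedGroup.of AnnGen.b)
        = (PresentedGroup.of AnnGen.a : AnnGroup j) ^ q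
          * (PresentedGroup.of AnnGen.b : AnnGroup j) ^ s
          * (PresentedGroup.of AnnGen.m : AnnGroup j) ^ (j * t) ∧
      φ (PresentedGroup.of AnnGen.m) = (PresentedGroup.of AnnGen.m : AnnGroup j) := by
  simpa using annulus_group_automorphism_basis_change_general j p q r s t 0
    (hdet ▸ isUnit_one) hq hs
end

section
/- Let P₀ be the group with presentation ⟨α, β, m ∣ α⁻¹mα = m⁻¹, βm = mβ, αβα⁻¹β⁻¹ = 1⟩ and P₁ the group with presentation ⟨α, β, m ∣ α⁻¹mα = m⁻¹, βm = mβ, αβα⁻¹β⁻¹ = m⟩. Then P₀ and P₁ are not isomorphic as groups. -/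
/-! Count homomorphisms into a commutative group `C`. The images of `α` and `β` are arbitrary, while
the relations become `m ^ 2 = 1` and `m ^ j = 1` for the image of `m`. When `j` is odd these force
`m = 1`; when `j` is even the second is redundant. So `C = {±1}` detects the parity of `j`. -/

theorem lift_presentedGroup_of_eq_one {ι G : Type*} [Group G] {rels : Set (FreeGroup ι)}
    (f : PresentedGroup rels →* G) {r : FreeGroup ι} (hr : r ∈ rels) :
    FreeGroup.lift (fun x => f (PresentedGroup.of x)) r = 1 := by
  have lift_eq : FreeGroup.lift (fun x => f (PresentedGroup.of x)) =
      f.comp (PresentedGroup.mk rels) :=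
    FreeGroup.ext_hom _ _ fun _ => FreeGroup.lift_apply_of
  rw [lift_eq, MonoidHom.comp_apply, PresentedGroup.one_of_mem hr, map_one]

namespace AnnGroup

variable {j : ℤ} {C : Type*} [CommGroup C]

theorem lift_annulusRels_eq_one_iff (v : AnnGen → C) :
    (∀ r ∈ annulusRels j, FreeGroup.lift v r = 1) ↔ v AnnGen.m ^ 2 = 1 ∧ v AnnGen.m ^ j = 1 := by
  have conj_mul (a m : C) : a⁻¹ * m * a * m = m ^ 2 := by
    rw [mul_right_comm a⁻¹, inv_mul_cancel, one_mul, sq]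
  have commutator_eq_one (a b : C) : a * b * a⁻¹ * b⁻¹ = 1 := by
    rw [mul_inv_cancel_comm, mul_inv_cancel]
  simp only [annulusRels, Set.mem_insert_iff, Set.mem_singleton_iff, forall_eq_or_imp, forall_eq,
    map_mul, map_inv, map_zpow, FreeGroup.lift_apply_of, conj_mul, commutator_eq_one, one_mul,
    true_and, zpow_neg, inv_eq_one]

/-- The universal property of `P_j` among commutative groups `C`: a homomorphism `P_j →* C` is the
triple of the images of `α`, `β` and `m`, of which only the last one is constrained. -/
def homEquiv (j : ℤ) (C : Type*) [CommGroup C] :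
    (AnnGroup j →* C) ≃ C × C × {c : C // c ^ 2 = 1 ∧ c ^ j = 1} where
  toFun f :=
    ⟨f (PresentedGroup.of AnnGen.a), f (PresentedGroup.of AnnGen.b),
      f (PresentedGroup.of AnnGen.m),
      (lift_annulusRels_eq_one_iff _).1 fun _ => lift_presentedGroup_of_eq_one f⟩
  invFun p :=
    PresentedGroup.toGroup (f := fun x => AnnGen.casesOn x p.1 p.2.1 p.2.2)
      ((lift_annulusRels_eq_one_iff _).2 p.2.2.2)
  left_inv f := PresentedGroup.ext fun x => by cases x <;> exact PresentedGroup.toGroup.of _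
  right_inv p := by simp

theorem card_hom (j : ℤ) (C : Type*) [CommGroup C] :
    Nat.card (AnnGroup j →* C) =
      Nat.card C ^ 2 * Nat.card {c : C // c ^ 2 = 1 ∧ c ^ j = 1} := by
  rw [Nat.card_congr (homEquiv j C), Nat.card_prod, Nat.card_prod, sq, mul_assoc]

theorem card_hom_of_even (hj : Even j) (C : Type*) [CommGroup C] :
    Nat.card (AnnGroup j →* C) = Nat.card C ^ 2 * Nat.card {c : C // c ^ 2 = 1} := by
  have zpow_eq_one (c : C) (hc : c ^ 2 = 1) : c ^ j = 1 := by
    obtain ⟨i, rfl⟩ := hj.two_dvd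
    rw [zpow_mul, zpow_ofNat, hc, one_zpow]
  simp only [card_hom, and_iff_left_of_imp (zpow_eq_one _)]

theorem card_hom_of_odd (hj : Odd j) (C : Type*) [CommGroup C] :
    Nat.card (AnnGroup j →* C) = Nat.card C ^ 2 := by
  have eq_one_iff (c : C) : c ^ 2 = 1 ∧ c ^ j = 1 ↔ c = 1 := by
    refine ⟨fun ⟨hc, hcj⟩ => ?_, by rintro rfl; simp⟩
    obtain ⟨i, rfl⟩ := hj
    rwa [zpow_add, zpow_mul, zpow_ofNat, hc, one_zpow, one_mul, zpow_one] at hcj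
  simp [card_hom, eq_one_iff]

end AnnGroup

theorem annulus_groups_not_isomorphic_general {j k : ℤ} (hj : Even j) (hk : Odd k) :
    IsEmpty (AnnGroup j ≃* AnnGroup k) := by
  refine ⟨fun e => ?_⟩
  have card_eq : Nat.card (AnnGroup j →* ℤˣ) = Nat.card (AnnGroup k →* ℤˣ) :=
    Nat.card_congr e.monoidHomCongrLeftEquiv
  have card_units : Nat.card ℤˣ = 2 := by simp
  have card_sq_eq_one : Nat.card {c : ℤˣ // c ^ 2 = 1} = 2 := by simp [Int.units_sq]
  rw [AnnGroup.card_hom_of_even hj, AnnGroup.card_hom_of_odd hk, card_units, card_sq_eq_one]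
    at card_eq
  norm_num at card_eq

/-- The groups `P₀ = π₁(Y₀)` and `P₁ = π₁(Y₁)` are not isomorphic. -/
theorem annulus_groups_not_isomorphic : IsEmpty (AnnGroup 0 ≃* AnnGroup 1) :=
  annulus_groups_not_isomorphic_general Even.zero odd_one
end

section
/- Let j, k ∈ {0,1} and let b, c, e, f be integers, and set d := 1 + 2bc. Let G be the group with presentation on generators α₁, β₁, α₂, β₂, m and relations α₁⁻¹mα₁ = m⁻¹, α₂⁻¹mα₂ = m⁻¹, β₁m = mβ₁, β₂m = mβ₂, α₁β₁α₁⁻¹β₁⁻¹ = m^j, α₂β₂α₂⁻¹β₂⁻¹ = m^k, α₁² = α₂²β₂^{2c}m^e, β₁ = α₂^{2b}β₂^{d}m^f. Let H be the group with presentation on generators α, β, m, γ and relations mγ = γm, αβα⁻¹β⁻¹ = m^{j+2(f−be)}, α⁻¹mα = m⁻¹, α⁻¹γα = m^{kc−e}γ⁻¹, β⁻¹mβ = m, β⁻¹γβ = m^{j−k+2(f−be)}γ. Then there is a group isomorphism θ : H → G with θ(α) = α₁, θ(β) = β₂, θ(m) = m, and θ(γ) = α₁⁻¹α₂β₂^{c}.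 -/
/-- Generators `α₁`, `β₁`, `α₂`, `β₂`, `m` of the glued group `G`. -/
inductive GlueGen : Type
  | a1 : GlueGen  -- α₁
  | b1 : GlueGen  -- β₁
  | a2 : GlueGen  -- α₂
  | b2 : GlueGen  -- β₂
  | m : GlueGen   -- m

open FreeGroup in
/-- The relators of the presentation (c-even) of the paper, with `d = 1 + 2bc`:
`α₁⁻¹mα₁ = m⁻¹`, `α₂⁻¹mα₂ = m⁻¹`, `β₁m = mβ₁`, `β₂m = mβ₂`, `α₁β₁α₁⁻¹β₁⁻¹ = m^j`,
`α₂β₂α₂⁻¹β₂⁻¹ = m^k`, `α₁² = α₂²β₂^{2c}m^e`, `β₁ = α₂^{2b}β₂^{d}m^f`. -/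
def cEvenRels (j k b c e f : ℤ) : Set (FreeGroup GlueGen) :=
  { (of GlueGen.a1)⁻¹ * of GlueGen.m * of GlueGen.a1 * of GlueGen.m,
    (of GlueGen.a2)⁻¹ * of GlueGen.m * of GlueGen.a2 * of GlueGen.m,
    of GlueGen.b1 * of GlueGen.m * (of GlueGen.b1)⁻¹ * (of GlueGen.m)⁻¹,
    of GlueGen.b2 * of GlueGen.m * (of GlueGen.b2)⁻¹ * (of GlueGen.m)⁻¹,
    of GlueGen.a1 * of GlueGen.b1 * (of GlueGen.a1)⁻¹ * (of GlueGen.b1)⁻¹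
      * (of GlueGen.m) ^ (-j),
    of GlueGen.a2 * of GlueGen.b2 * (of GlueGen.a2)⁻¹ * (of GlueGen.b2)⁻¹
      * (of GlueGen.m) ^ (-k),
    (of GlueGen.a1) ^ 2
      * ((of GlueGen.a2) ^ 2 * (of GlueGen.b2) ^ (2 * c) * (of GlueGen.m) ^ e)⁻¹,
    of GlueGen.b1
      * ((of GlueGen.a2) ^ (2 * b) * (of GlueGen.b2) ^ (1 + 2 * b * c)
          * (of GlueGen.m) ^ f)⁻¹ }

/-- Generators `α`, `β`, `m`, `γ` of the torus-bundle group `H`. -/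
inductive TBGen : Type
  | a : TBGen  -- α
  | b : TBGen  -- β
  | m : TBGen  -- m
  | g : TBGen  -- γ

open FreeGroup in
/-- The relators of the presentation of the fundamental group of the torus bundle
`M((−1, kc−e; 0, −1), (1, j−k+2(f−be); 0, 1); (j+2(f−be), 0))`:
`mγ = γm`, `αβα⁻¹β⁻¹ = m^{j+2(f−be)}`, `α⁻¹mα = m⁻¹`, `α⁻¹γα = m^{kc−e}γ⁻¹`,
`β⁻¹mβ = m`, `β⁻¹γβ = m^{j−k+2(f−be)}γ`. -/
def torusBundleRels (j k b c e f : ℤ) : Set (FreeGroup TBGen) :=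
  { of TBGen.m * of TBGen.g * (of TBGen.m)⁻¹ * (of TBGen.g)⁻¹,
    of TBGen.a * of TBGen.b * (of TBGen.a)⁻¹ * (of TBGen.b)⁻¹
      * (of TBGen.m) ^ (-(j + 2 * (f - b * e))),
    (of TBGen.a)⁻¹ * of TBGen.m * of TBGen.a * of TBGen.m,
    (of TBGen.a)⁻¹ * of TBGen.g * of TBGen.a
      * ((of TBGen.m) ^ (k * c - e) * (of TBGen.g)⁻¹)⁻¹,
    (of TBGen.b)⁻¹ * of TBGen.m * of TBGen.b * (of TBGen.m)⁻¹,
    (of TBGen.b)⁻¹ * of TBGen.g * of TBGen.b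
      * ((of TBGen.m) ^ (j - k + 2 * (f - b * e)) * of TBGen.g)⁻¹ }

/-!
Write `γ = α₁⁻¹α₂β₂^c`. Since `α₂` inverts `m` and conjugates `β₂` to `m^kβ₂`, one has
`(α₂β₂^c)² = α₂²β₂^{2c}m^{kc}`, so the gluing relation for `α₁²` becomes
`(α₁γ)² = α₁²m^{kc-e}`, which says how `α₁` conjugates `γ`. Since `α₂²` is central in `π₁(Y_k)`,
raising that gluing relation to the power `b` turns the relation for `β₁` into
`β₁ = α₁^{2b}β₂m^{f-be}`. Hence `α₂` and `β₁` can be eliminated (Tietze moves), and under this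
substitution the relations of `π₁(Y_j)` and `π₁(Y_k)` become those of the torus bundle.
-/

section Semiconj

theorem commute_sq_of_semiconjBy {M : Type*} [Monoid M] {a x y : M} (hxy : SemiconjBy a x y)
    (hyx : SemiconjBy a y x) : Commute (a ^ 2) x := by
  rw [sq]
  exact hyx.mul_left hxy

variable {G : Type*} [Group G] {a u x y z : G}

theorem semiconjBy_mul_iff_right (ha : SemiconjBy a y z) :
    SemiconjBy (a * u) x z ↔ SemiconjBy u x y :=
  ⟨fun h ↦ by simpa only [inv_mul_cancel_left] using ha.inv_symm_left.mul_left h, ha.mul_left⟩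

theorem inv_mul_mul_eq_mul_inv_iff_sq :
    a⁻¹ * x * a = y * x⁻¹ ↔ (a * x) ^ 2 = a ^ 2 * y := by
  rw [eq_mul_inv_iff_mul_eq, ← mul_right_inj (a ^ 2)]
  simp only [sq, mul_assoc, mul_inv_cancel_left]

end Semiconj

/-- The relations of `π₁(Y_k)`, the fundamental group of the annulus bundle `Y_k`:
`a⁻¹ma = m⁻¹`, `bm = mb`, `aba⁻¹b⁻¹ = m^k`, for elements `a`, `b`, `m` of an arbitrary group.
The conjugation relations are encoded by `SemiconjBy`, which composes in the left argument. -/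
structure AnnulusBundleRelations {G : Type*} [Group G] (k : ℤ) (a b m : G) : Prop where
  semiconjBy_inv : SemiconjBy a m m⁻¹
  commute : Commute b m
  semiconjBy_zpow_mul : SemiconjBy a b (m ^ k * b)

theorem annulusBundleRelations_iff {G : Type*} [Group G] {k : ℤ} {a b m : G} :
    AnnulusBundleRelations k a b m ↔
      SemiconjBy a m m⁻¹ ∧ Commute b m ∧ SemiconjBy a b (m ^ k * b) :=
  ⟨fun h ↦ ⟨h.1, h.2, h.3⟩, fun h ↦ ⟨h.1, h.2.1, h.2.2⟩⟩

namespace AnnulusBundleRelations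

variable {G : Type*} [Group G] {k n : ℤ} {a b m u g : G}

theorem semiconjBy_zpow (h : AnnulusBundleRelations k a b m) (i : ℤ) :
    SemiconjBy a (m ^ i) (m ^ (-i)) := by
  simpa only [inv_zpow'] using h.semiconjBy_inv.zpow_right i

theorem semiconjBy_zpow_mul_zpow_mul (h : AnnulusBundleRelations k a b m) (i : ℤ) :
    SemiconjBy a (m ^ i * b) (m ^ (k - i) * b) := by
  have := (h.semiconjBy_zpow i).mul_right h.semiconjBy_zpow_mul
  rwa [← mul_assoc, ← zpow_add, neg_add_eq_sub] at this

theorem commute_sq_left (h : AnnulusBundleRelations k a b m) : Commute (a ^ 2) m :=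
  commute_sq_of_semiconjBy h.semiconjBy_inv (by simpa using h.semiconjBy_inv.inv_right)

theorem semiconjBy_zpow_mul_symm (h : AnnulusBundleRelations k a b m) :
    SemiconjBy a (m ^ k * b) b := by
  simpa using h.semiconjBy_zpow_mul_zpow_mul k

theorem commute_sq_right (h : AnnulusBundleRelations k a b m) : Commute (a ^ 2) b :=
  commute_sq_of_semiconjBy h.semiconjBy_zpow_mul h.semiconjBy_zpow_mul_symm

theorem left_mul_zpow_iff (i : ℤ) :
    AnnulusBundleRelations k (a * b ^ i) b m ↔ AnnulusBundleRelations k a b m := by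
  have shift {a : G} (h : AnnulusBundleRelations k a b m) (i : ℤ) :
      AnnulusBundleRelations k (a * b ^ i) b m :=
    ⟨h.semiconjBy_inv.mul_left (h.commute.zpow_left i), h.commute,
      h.semiconjBy_zpow_mul.mul_left (Commute.zpow_self b i)⟩
  exact ⟨fun h ↦ by simpa using shift h (-i), fun h ↦ shift h i⟩

theorem mul_zpow_sq (h : AnnulusBundleRelations k a b m) (i : ℤ) :
    (a * b ^ i) ^ 2 = a ^ 2 * b ^ (2 * i) * m ^ (k * i) := by
  have hmb : Commute (m ^ (k * i)) (b ^ i) := (h.commute.zpow_zpow i (k * i)).symm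
  have hba : b ^ i * a = a * (m ^ (k * i) * b ^ i) := by
    rw [← (h.semiconjBy_zpow_mul_symm.zpow_right i).eq, (h.commute.symm.zpow_left k).mul_zpow,
      ← zpow_mul]
  calc (a * b ^ i) ^ 2 = a * (b ^ i * a) * b ^ i := by simp only [sq, mul_assoc]
    _ = a ^ 2 * (b ^ i * b ^ i) * m ^ (k * i) := by
      rw [hba, hmb.eq]
      simp only [sq, mul_assoc, hmb.eq]
    _ = a ^ 2 * b ^ (2 * i) * m ^ (k * i) := by rw [← zpow_add, two_mul]

theorem mul_right (h : AnnulusBundleRelations n a b m) (hua : Commute a u) (hum : Commute u m) :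
    AnnulusBundleRelations n a (u * b) m where
  semiconjBy_inv := h.semiconjBy_inv
  commute := hum.mul_left h.commute
  semiconjBy_zpow_mul := by
    rw [← (hum.zpow_right n).left_comm]
    exact SemiconjBy.mul_right hua h.semiconjBy_zpow_mul

theorem right_mul_zpow (h : AnnulusBundleRelations n a b m) (s : ℤ) :
    AnnulusBundleRelations (n - 2 * s) a (b * m ^ s) m where
  semiconjBy_inv := h.semiconjBy_inv
  commute := h.commute.mul_left (Commute.zpow_self m s)
  semiconjBy_zpow_mul := by
    have := h.semiconjBy_zpow_mul_zpow_mul s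
    rw [(h.commute.zpow_right s).eq, ← mul_assoc, ← zpow_add]
    rwa [show n - 2 * s + s = n - s by ring]

theorem right_zpow_mul_mul_zpow_iff (i s : ℤ) :
    AnnulusBundleRelations n a (a ^ (2 * i) * b * m ^ s) m ↔
      AnnulusBundleRelations (n + 2 * s) a b m := by
  have shear {n : ℤ} {b : G} (h : AnnulusBundleRelations n a b m) (i s : ℤ) :
      AnnulusBundleRelations (n - 2 * s) a (a ^ (2 * i) * b * m ^ s) m := by
    have hm : Commute (a ^ (2 * i)) m := by
      rw [zpow_mul, zpow_ofNat]
      exact h.commute_sq_left.zpow_left i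
    exact (h.mul_right (Commute.self_zpow a _) hm).right_mul_zpow s
  refine ⟨fun h ↦ ?_, fun h ↦ by simpa using shear h i s⟩
  simpa [mul_assoc] using shear h (-i) (-s)

theorem left_mul_iff (h : AnnulusBundleRelations n a b m) :
    AnnulusBundleRelations k (a * g) b m ↔
      Commute m g ∧ b⁻¹ * g * b = m ^ (n - k) * g := by
  have hm : SemiconjBy (a * g) m m⁻¹ ↔ Commute m g := by
    rw [semiconjBy_mul_iff_right h.semiconjBy_inv, Commute.symm_iff, Commute]
  have hb : SemiconjBy (a * g) b (m ^ k * b) ↔ b⁻¹ * g * b = m ^ (n - k) * g := by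
    have ha : SemiconjBy a (m ^ (n - k) * b) (m ^ k * b) := by
      simpa only [sub_sub_cancel] using h.semiconjBy_zpow_mul_zpow_mul (n - k)
    rw [semiconjBy_mul_iff_right ha, ← (h.commute.zpow_right (n - k)).eq, SemiconjBy,
      mul_assoc, mul_assoc, inv_mul_eq_iff_eq_mul]
  exact ⟨fun H ↦ ⟨hm.1 H.semiconjBy_inv, hb.1 H.semiconjBy_zpow_mul⟩,
    fun H ↦ ⟨hm.2 H.1, h.commute, hb.2 H.2⟩⟩

theorem zpow_mul_zpow_mul_zpow_of_sq_eq (h : AnnulusBundleRelations k a b m) {x : G} {c e : ℤ}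
    (hx : x ^ 2 = a ^ 2 * b ^ (2 * c) * m ^ e) (i f : ℤ) :
    a ^ (2 * i) * b ^ (1 + 2 * i * c) * m ^ f = x ^ (2 * i) * b * m ^ (f - i * e) := by
  have hab := h.commute_sq_right.zpow_right (2 * c)
  have habm := (h.commute_sq_left.mul_left (h.commute.zpow_left (2 * c))).zpow_right e
  have hxi : x ^ (2 * i) = a ^ (2 * i) * b ^ (2 * c * i) * m ^ (e * i) := by
    rw [zpow_mul, zpow_ofNat, hx, habm.mul_zpow, hab.mul_zpow]
    simp only [zpow_mul, zpow_ofNat]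
  calc a ^ (2 * i) * b ^ (1 + 2 * i * c) * m ^ f
      = a ^ (2 * i) * (b ^ (2 * c * i) * b) * (m ^ (e * i) * m ^ (f - i * e)) := by
        rw [← zpow_add_one, ← zpow_add]
        ring_nf
    _ = a ^ (2 * i) * b ^ (2 * c * i) * (b * m ^ (e * i)) * m ^ (f - i * e) := by
        simp only [mul_assoc]
    _ = x ^ (2 * i) * b * m ^ (f - i * e) := by
        rw [hxi, (h.commute.zpow_right (e * i)).eq]
        simp only [mul_assoc]

theorem sq_eq_iff_mul_zpow_sq_eq (h : AnnulusBundleRelations k a b m) {x : G} (c e : ℤ) :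
    x ^ 2 = a ^ 2 * b ^ (2 * c) * m ^ e ↔ (a * b ^ c) ^ 2 = x ^ 2 * m ^ (k * c - e) := by
  rw [h.mul_zpow_sq, zpow_sub, (Commute.zpow_zpow_self m (k * c) e).inv_right.eq, ← mul_assoc,
    mul_left_inj, eq_mul_inv_iff_mul_eq, eq_comm]

end AnnulusBundleRelations

section Presentation

variable {α β : Type*} {r : Set (FreeGroup α)} {s : Set (FreeGroup β)}

theorem lift_presentedGroupOf_eq_one :
    ∀ w ∈ r, FreeGroup.lift (PresentedGroup.of (rels := r)) w = 1 := by
  have h : FreeGroup.lift (PresentedGroup.of (rels := r)) = PresentedGroup.mk r := by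
    ext
    simp only [FreeGroup.lift_apply_of, PresentedGroup.of]
  exact fun w hw ↦ by rw [h, PresentedGroup.one_of_mem hw]

theorem presentedGroup_toGroup_comp_of {G : Type*} [Group G] {p : α → G}
    (hp : ∀ w ∈ r, FreeGroup.lift p w = 1) :
    PresentedGroup.toGroup hp ∘ PresentedGroup.of = p :=
  funext fun _ ↦ PresentedGroup.toGroup.of hp

theorem exists_presentedGroup_mulEquiv {p : α → PresentedGroup s} {q : β → PresentedGroup r}
    (hp : ∀ w ∈ r, FreeGroup.lift p w = 1) (hq : ∀ w ∈ s, FreeGroup.lift q w = 1)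
    (hqp : PresentedGroup.toGroup hq ∘ p = PresentedGroup.of)
    (hpq : PresentedGroup.toGroup hp ∘ q = PresentedGroup.of) :
    ∃ θ : PresentedGroup r ≃* PresentedGroup s, ∀ x, θ (PresentedGroup.of x) = p x :=
  ⟨(PresentedGroup.toGroup hp).toMulEquiv (PresentedGroup.toGroup hq)
    (PresentedGroup.ext fun x ↦ by simpa using congrFun hqp x)
    (PresentedGroup.ext fun y ↦ by simpa using congrFun hpq y),
    fun _ ↦ PresentedGroup.toGroup.of hp⟩

end Presentation

section Relators

open scoped commutatorElement

variable {G : Type*} [Group G]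

theorem inv_mul_mul_mul_eq_one_iff_semiconjBy {a m : G} :
    a⁻¹ * m * a * m = 1 ↔ SemiconjBy a m m⁻¹ := by
  rw [mul_eq_one_iff_eq_inv, mul_assoc, inv_mul_eq_iff_eq_mul, SemiconjBy,
    eq_mul_inv_iff_mul_eq, mul_assoc, ← eq_inv_mul_iff_mul_eq]

theorem commutatorElement_mul_zpow_neg_eq_one_iff_semiconjBy {a b m : G} (i : ℤ) :
    ⁅a, b⁆ * m ^ (-i) = 1 ↔ SemiconjBy a b (m ^ i * b) := by
  rw [zpow_neg, mul_inv_eq_one, commutatorElement_def, mul_inv_eq_iff_eq_mul,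
    mul_inv_eq_iff_eq_mul, SemiconjBy]

variable {j k b c e f : ℤ}

theorem lift_cEvenRels_eq_one_iff (φ : GlueGen → G) :
    (∀ w ∈ cEvenRels j k b c e f, FreeGroup.lift φ w = 1) ↔
      AnnulusBundleRelations j (φ .a1) (φ .b1) (φ .m) ∧
      AnnulusBundleRelations k (φ .a2) (φ .b2) (φ .m) ∧
      φ .a1 ^ 2 = φ .a2 ^ 2 * φ .b2 ^ (2 * c) * φ .m ^ e ∧
      φ .b1 = φ .a2 ^ (2 * b) * φ .b2 ^ (1 + 2 * b * c) * φ .m ^ f := by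
  simp only [cEvenRels, Set.forall_mem_insert, Set.mem_singleton_iff, forall_eq, map_mul, map_inv,
    map_zpow, map_pow, FreeGroup.lift_apply_of, inv_mul_mul_mul_eq_one_iff_semiconjBy,
    ← commutatorElement_def, map_commutatorElement, commutatorElement_eq_one_iff_commute,
    commutatorElement_mul_zpow_neg_eq_one_iff_semiconjBy]
  simp only [mul_inv_eq_one, annulusBundleRelations_iff]
  tauto

theorem lift_torusBundleRels_eq_one_iff (φ : TBGen → G) :
    (∀ w ∈ torusBundleRels j k b c e f, FreeGroup.lift φ w = 1) ↔
      AnnulusBundleRelations (j + 2 * (f - b * e)) (φ .a) (φ .b) (φ .m) ∧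
      Commute (φ .m) (φ .g) ∧
      (φ .b)⁻¹ * φ .g * φ .b = φ .m ^ (j + 2 * (f - b * e) - k) * φ .g ∧
      (φ .a)⁻¹ * φ .g * φ .a = φ .m ^ (k * c - e) * (φ .g)⁻¹ := by
  have hbm : (φ .b)⁻¹ * φ .m * φ .b = φ .m ↔ Commute (φ .b) (φ .m) := by
    rw [mul_assoc, inv_mul_eq_iff_eq_mul, commute_iff_eq, eq_comm]
  simp only [torusBundleRels, Set.forall_mem_insert, Set.mem_singleton_iff, forall_eq, map_mul,
    map_inv, map_zpow, FreeGroup.lift_apply_of, inv_mul_mul_mul_eq_one_iff_semiconjBy,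
    ← commutatorElement_def, map_commutatorElement, commutatorElement_eq_one_iff_commute,
    commutatorElement_mul_zpow_neg_eq_one_iff_semiconjBy]
  simp only [mul_inv_eq_one, hbm, annulusBundleRelations_iff, sub_add_eq_add_sub]
  tauto

end Relators

section Tietze

variable {G : Type*} [Group G] {j k b c e f : ℤ}

/-- The images of the torus-bundle generators `α`, `β`, `m`, `γ` in terms of elements `φ` of a
group that play the roles of `α₁`, `β₁`, `α₂`, `β₂`, `m`. -/
def torusBundleGenerators (c : ℤ) (φ : GlueGen → G) : TBGen → G
  | .a => φ .a1
  | .b => φ .b2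
  | .m => φ .m
  | .g => (φ .a1)⁻¹ * φ .a2 * φ .b2 ^ c

/-- The images of the generators `α₁`, `β₁`, `α₂`, `β₂`, `m` of the glued group in terms of
elements `φ` of a group that play the roles of `α`, `β`, `m`, `γ`. -/
def cEvenGenerators (b c e f : ℤ) (φ : TBGen → G) : GlueGen → G
  | .a1 => φ .a
  | .b1 => φ .a ^ (2 * b) * φ .b * φ .m ^ (f - b * e)
  | .a2 => φ .a * φ .g * φ .b ^ (-c)
  | .b2 => φ .b
  | .m => φ .m

theorem torusBundleGenerators_cEvenGenerators (φ : TBGen → G) :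
    torusBundleGenerators c (cEvenGenerators b c e f φ) = φ := by
  funext x
  cases x <;> simp [torusBundleGenerators, cEvenGenerators, mul_assoc]

theorem cEvenGenerators_torusBundleGenerators_iff (φ : GlueGen → G) :
    cEvenGenerators b c e f (torusBundleGenerators c φ) = φ ↔
      φ .b1 = φ .a1 ^ (2 * b) * φ .b2 * φ .m ^ (f - b * e) := by
  refine ⟨fun h ↦ (congrFun h .b1).symm, fun h ↦ funext fun x ↦ ?_⟩
  cases x <;> simp [torusBundleGenerators, cEvenGenerators, mul_assoc, h]

theorem comp_torusBundleGenerators {G' : Type*} [Group G'] (F : G →* G') (φ : GlueGen → G) :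
    F ∘ torusBundleGenerators c φ = torusBundleGenerators c (F ∘ φ) := by
  funext x
  cases x <;> simp [torusBundleGenerators]

theorem comp_cEvenGenerators {G' : Type*} [Group G'] (F : G →* G') (φ : TBGen → G) :
    F ∘ cEvenGenerators b c e f φ = cEvenGenerators b c e f (F ∘ φ) := by
  funext x
  cases x <;> simp [cEvenGenerators]

theorem lift_cEvenRels_eq_one_iff_torusBundleRels (φ : GlueGen → G) :
    (∀ w ∈ cEvenRels j k b c e f, FreeGroup.lift φ w = 1) ↔
      (∀ w ∈ torusBundleRels j k b c e f, FreeGroup.lift (torusBundleGenerators c φ) w = 1) ∧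
      cEvenGenerators b c e f (torusBundleGenerators c φ) = φ := by
  have hγ : φ .a1 * torusBundleGenerators c φ .g = φ .a2 * φ .b2 ^ c := by
    simp [torusBundleGenerators, mul_assoc]
  rw [lift_cEvenRels_eq_one_iff, lift_torusBundleRels_eq_one_iff,
    cEvenGenerators_torusBundleGenerators_iff]
  calc
    _ ↔ AnnulusBundleRelations j (φ .a1) (φ .b1) (φ .m) ∧
          AnnulusBundleRelations k (φ .a2) (φ .b2) (φ .m) ∧
          (φ .a2 * φ .b2 ^ c) ^ 2 = φ .a1 ^ 2 * φ .m ^ (k * c - e) ∧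
          φ .b1 = φ .a1 ^ (2 * b) * φ .b2 * φ .m ^ (f - b * e) := by
      refine and_congr_right fun _ ↦ and_congr_right fun h₂ ↦ ?_
      rw [← h₂.sq_eq_iff_mul_zpow_sq_eq]
      exact and_congr_right fun hsq ↦ by rw [h₂.zpow_mul_zpow_mul_zpow_of_sq_eq hsq]
    _ ↔ (AnnulusBundleRelations (j + 2 * (f - b * e)) (φ .a1) (φ .b2) (φ .m) ∧
          AnnulusBundleRelations k (φ .a2 * φ .b2 ^ c) (φ .b2) (φ .m) ∧
          (φ .a2 * φ .b2 ^ c) ^ 2 = φ .a1 ^ 2 * φ .m ^ (k * c - e)) ∧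
          φ .b1 = φ .a1 ^ (2 * b) * φ .b2 * φ .m ^ (f - b * e) := by
      simp only [← and_assoc]
      refine and_congr_left fun hb₁ ↦ ?_
      rw [hb₁, AnnulusBundleRelations.right_zpow_mul_mul_zpow_iff,
        AnnulusBundleRelations.left_mul_zpow_iff]
    _ ↔ _ := by
      rw [← hγ, ← inv_mul_mul_eq_mul_inv_iff_sq, ← and_assoc (a := Commute _ _)]
      refine and_congr_left fun _ ↦ and_congr_right fun h ↦ ?_
      rw [h.left_mul_iff]
      rfl

theorem lift_torusBundleRels_eq_one_iff_cEvenRels (φ : TBGen → G) :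
    (∀ w ∈ torusBundleRels j k b c e f, FreeGroup.lift φ w = 1) ↔
      ∀ w ∈ cEvenRels j k b c e f, FreeGroup.lift (cEvenGenerators b c e f φ) w = 1 := by
  rw [lift_cEvenRels_eq_one_iff_torusBundleRels, torusBundleGenerators_cEvenGenerators,
    and_iff_left rfl]

end Tietze

theorem cEven_group_is_torus_bundle_group_general (j k b c e f : ℤ) :
    ∃ θ : PresentedGroup (torusBundleRels j k b c e f)
        ≃* PresentedGroup (cEvenRels j k b c e f),
      θ (PresentedGroup.of TBGen.a) = PresentedGroup.of GlueGen.a1 ∧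
      θ (PresentedGroup.of TBGen.b) = PresentedGroup.of GlueGen.b2 ∧
      θ (PresentedGroup.of TBGen.m) = PresentedGroup.of GlueGen.m ∧
      θ (PresentedGroup.of TBGen.g)
        = (PresentedGroup.of GlueGen.a1 : PresentedGroup (cEvenRels j k b c e f))⁻¹
          * PresentedGroup.of GlueGen.a2
          * (PresentedGroup.of GlueGen.b2 : PresentedGroup (cEvenRels j k b c e f)) ^ c := by
  obtain ⟨hp, hφ⟩ := (lift_cEvenRels_eq_one_iff_torusBundleRels _).1
    (lift_presentedGroupOf_eq_one (r := cEvenRels j k b c e f))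
  have hq := (lift_torusBundleRels_eq_one_iff_cEvenRels _).1
    (lift_presentedGroupOf_eq_one (r := torusBundleRels j k b c e f))
  have hqp : PresentedGroup.toGroup hq ∘ torusBundleGenerators c PresentedGroup.of =
      PresentedGroup.of := by
    rw [comp_torusBundleGenerators, presentedGroup_toGroup_comp_of,
      torusBundleGenerators_cEvenGenerators]
  have hpq : PresentedGroup.toGroup hp ∘ cEvenGenerators b c e f PresentedGroup.of =
      PresentedGroup.of := by
    rw [comp_cEvenGenerators, presentedGroup_toGroup_comp_of, hφ]
  obtain ⟨θ, hθ⟩ := exists_presentedGroup_mulEquiv hp hq hqp hpq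
  exact ⟨θ, hθ .a, hθ .b, hθ .m, hθ .g⟩

/-- The group (c-even) of the paper is isomorphic to the fundamental group of the torus
bundle over the torus `M((−1, kc−e; 0, −1), (1, j−k+2(f−be); 0, 1); (j+2(f−be), 0))`,
via `α ↦ α₁`, `β ↦ β₂`, `m ↦ m`, `γ ↦ α₁⁻¹α₂β₂^c`. -/
theorem cEven_group_is_torus_bundle_group (j k b c e f : ℤ)
    (hj : j = 0 ∨ j = 1) (hk : k = 0 ∨ k = 1) :
    ∃ θ : PresentedGroup (torusBundleRels j k b c e f)
        ≃* PresentedGroup (cEvenRels j k b c e f),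
      θ (PresentedGroup.of TBGen.a) = PresentedGroup.of GlueGen.a1 ∧
      θ (PresentedGroup.of TBGen.b) = PresentedGroup.of GlueGen.b2 ∧
      θ (PresentedGroup.of TBGen.m) = PresentedGroup.of GlueGen.m ∧
      θ (PresentedGroup.of TBGen.g)
        = (PresentedGroup.of GlueGen.a1 : PresentedGroup (cEvenRels j k b c e f))⁻¹
          * PresentedGroup.of GlueGen.a2
          * (PresentedGroup.of GlueGen.b2 : PresentedGroup (cEvenRels j k b c e f)) ^ c :=
  cEven_group_is_torus_bundle_group_general j k b c e f
end

section
/- Let j, k ∈ {0,1} and let b, c, e, f be integers, set d := 1 + 2bc, and let G be the group with presentation on generators α₁, β₁, α₂, β₂, m and relations α₁⁻¹mα₁ = m⁻¹, α₂⁻¹mα₂ = m⁻¹, β₁m = mβ₁, β₂m = mβ₂, α₁β₁α₁⁻¹β₁⁻¹ = m^j, α₂β₂α₂⁻¹β₂⁻¹ = m^k, α₁² = α₂²β₂^{2c}m^e, β₁ = α₂^{2b}β₂^{d}m^f. Set γ := α₁⁻¹α₂β₂^{c} in G. Then the following relations hold in G: m·γ = γ·m; α₁β₂α₁⁻¹β₂⁻¹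 = m^{j+2(f−be)}; α₁⁻¹γα₁ = m^{kc−e}·γ⁻¹; and β₂⁻¹γβ₂ = m^{j−k+2(f−be)}·γ. -/
/-!
Conjugation by `α₁` and `α₂` inverts `m`, while `β₁` and `β₂` centralize it. Hence `α₁²` and `α₂²`
commute with `m`, and `α₂²` also commutes with `β₂`, so the gluing relations combine into
`β₁ = (α₁²)^b β₂ m^(f - be)`. As long as all values are powers of `m`, commutators `⁅α₁, ·⁆` are
multiplicative on elements centralizing `m`. Together with `⁅α₁, m^n⁆ = m^(-2n)` this gives
`⁅α₁, β₂⁆` from `⁅α₁, β₁⁆ = m^j`, and `⁅γ, β₂⁆ = ⁅α₁⁻¹α₂, β₂⁆ = ⁅α₂, β₂⁆⁻¹⁅α₁, β₂⁆` follows. Finally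
`α₁⁻¹γα₁γ = α₁⁻²(α₂β₂^c)²`, where `(α₂β₂^c)² = α₂² ⁅α₂, β₂^c⁆ β₂^(2c) = α₁² m^(kc - e)`.
-/

open scoped commutatorElement

section ConjInverts

variable {G : Type*} [Group G] {a b x y : G}

/-- Conjugation by `a` inverts `x`, that is `a * x * a⁻¹ = x⁻¹`; this is how `α₁` and `α₂`
act on `m`. -/
def ConjInverts (a x : G) : Prop :=
  SemiconjBy a x x⁻¹

theorem conjInverts_iff : ConjInverts a x ↔ a⁻¹ * x * a * x = 1 := by
  rw [ConjInverts, SemiconjBy, eq_inv_mul_iff_mul_eq, eq_comm, mul_assoc, mul_assoc, inv_mul_eq_one]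

namespace ConjInverts

theorem zpow_right (h : ConjInverts a x) (n : ℤ) : ConjInverts a (x ^ n) := by
  simpa only [ConjInverts, inv_zpow] using SemiconjBy.zpow_right h n

theorem semiconjBy_inv (h : ConjInverts a x) : SemiconjBy a x⁻¹ x := by
  simpa only [inv_inv] using SemiconjBy.inv_right h

theorem inv_left (h : ConjInverts a x) : ConjInverts a⁻¹ x :=
  h.semiconjBy_inv.inv_symm_left

theorem commute_mul_left (ha : ConjInverts a x) (hb : ConjInverts b x) : Commute (a * b) x :=
  ha.semiconjBy_inv.mul_left hb

theorem commute_sq_left (h : ConjInverts a x) : Commute (a ^ 2) x :=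
  sq a ▸ h.commute_mul_left h

theorem commutator_zpow_right (h : ConjInverts a x) (n : ℤ) : ⁅a, x ^ n⁆ = x ^ (-2 * n) := by
  rw [commutatorElement_def, (h.zpow_right n).eq]
  group

theorem commutator_inv_left (h : ConjInverts a ⁅a, y⁆) : ⁅a⁻¹, y⁆ = ⁅a, y⁆ := by
  rw [commutatorElement_inv_left, ← commutatorElement_inv, mul_assoc, inv_mul_eq_iff_eq_mul]
  exact (SemiconjBy.eq h).symm

theorem commutator_mul_left (h : ConjInverts a ⁅b, y⁆) : ⁅a * b, y⁆ = ⁅b, y⁆⁻¹ * ⁅a, y⁆ := by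
  rw [commutatorElement_mul_left_eq_conj_mul, SemiconjBy.eq h, mul_inv_cancel_right]

theorem commute_sq_left_of_commutator (h : ConjInverts a ⁅a, y⁆) : Commute (a ^ 2) y := by
  rw [← commutatorElement_eq_one_iff_commute, sq, h.commutator_mul_left, inv_mul_cancel]

theorem mul_sq (h : ConjInverts a ⁅a, y⁆) : (a * y) ^ 2 = a ^ 2 * ⁅a, y⁆ * y ^ 2 := by
  rw [← h.commutator_inv_left, commutatorElement_def, sq (a * y)]
  group

end ConjInverts

end ConjInverts

section Commutator

variable {G : Type*} [Group G] {a x y : G}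

theorem commutator_mul_right_of_commute (h : Commute x ⁅a, y⁆) :
    ⁅a, x * y⁆ = ⁅a, x⁆ * ⁅a, y⁆ := by
  rw [commutatorElement_mul_right_eq_mul_conj, mul_assoc, mul_assoc, h.mul_inv_cancel_assoc]

theorem commutator_zpow_right_of_commute (h : Commute x ⁅a, x⁆) (n : ℤ) :
    ⁅a, x ^ n⁆ = ⁅a, x⁆ ^ n := by
  rw [commutatorElement_def, ← conj_zpow, ← MulAut.conj_apply, conj_eq_commutatorElement_mul,
    h.symm.mul_zpow, mul_inv_cancel_right]

end Commutator

/-- The elements `a₁`, `b₁`, `a₂`, `b₂`, `m` of a group satisfy the defining relations of (c-even),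
so that they are the images of the generators under a homomorphism from that group. -/
structure CEvenRelations {G : Type*} [Group G] (j k b c e f : ℤ) (a₁ b₁ a₂ b₂ m : G) : Prop where
  conjInverts₁ : ConjInverts a₁ m
  conjInverts₂ : ConjInverts a₂ m
  commute₁ : Commute b₁ m
  commute₂ : Commute b₂ m
  commutator₁ : ⁅a₁, b₁⁆ = m ^ j
  commutator₂ : ⁅a₂, b₂⁆ = m ^ k
  sq_eq : a₁ ^ 2 = a₂ ^ 2 * b₂ ^ (2 * c) * m ^ e
  b₁_eq : b₁ = a₂ ^ (2 * b) * b₂ ^ (1 + 2 * b * c) * m ^ f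

theorem cEvenRelations_of (j k b c e f : ℤ) :
    CEvenRelations j k b c e f
      (PresentedGroup.of (rels := cEvenRels j k b c e f) GlueGen.a1)
      (PresentedGroup.of GlueGen.b1) (PresentedGroup.of GlueGen.a2)
      (PresentedGroup.of GlueGen.b2) (PresentedGroup.of GlueGen.m) := by
  have relator {r : FreeGroup GlueGen} (hr : r ∈ cEvenRels j k b c e f) :
      PresentedGroup.mk (cEvenRels j k b c e f) r = 1 := PresentedGroup.one_of_mem hr
  constructor
  · rw [conjInverts_iff]
    exact relator (by simp [cEvenRels])
  · rw [conjInverts_iff]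
    exact relator (by simp [cEvenRels])
  · exact commutatorElement_eq_one_iff_commute.mp (relator (by simp [cEvenRels]))
  · exact commutatorElement_eq_one_iff_commute.mp (relator (by simp [cEvenRels]))
  · rw [← mul_inv_eq_one, ← zpow_neg]
    exact relator (by simp [cEvenRels])
  · rw [← mul_inv_eq_one, ← zpow_neg]
    exact relator (by simp [cEvenRels])
  · exact mul_inv_eq_one.mp (relator (by simp [cEvenRels]))
  · exact mul_inv_eq_one.mp (relator (by simp [cEvenRels]))

namespace CEvenRelations

variable {G : Type*} [Group G] {j k b c e f : ℤ} {a₁ b₁ a₂ b₂ m : G}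

theorem b₁_eq_sq_zpow_mul (h : CEvenRelations j k b c e f a₁ b₁ a₂ b₂ m) :
    b₁ = (a₁ ^ 2) ^ b * (b₂ * m ^ (f - b * e)) := by
  have hinv : ConjInverts a₂ ⁅a₂, b₂⁆ := h.commutator₂ ▸ h.conjInverts₂.zpow_right k
  have ha₂b₂ : Commute (a₂ ^ 2) b₂ := hinv.commute_sq_left_of_commutator
  have ha₂m : Commute (a₂ ^ 2) m := h.conjInverts₂.commute_sq_left
  have hsq : (a₁ ^ 2) ^ b = a₂ ^ (2 * b) * b₂ ^ (2 * b * c) * m ^ (b * e) := by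
    rw [h.sq_eq, ((ha₂m.zpow_right e).mul_left (h.commute₂.zpow_zpow _ e)).mul_zpow,
      (ha₂b₂.zpow_right _).mul_zpow, ← zpow_mul, ← zpow_mul, mul_right_comm 2 c b,
      mul_comm e b, zpow_mul a₂, zpow_ofNat]
  calc b₁ = a₂ ^ (2 * b) * b₂ ^ (2 * b * c) * b₂ * m ^ (b * e) * m ^ (f - b * e) := by
        rw [h.b₁_eq]
        group
    _ = (a₁ ^ 2) ^ b * (b₂ * m ^ (f - b * e)) := by
        rw [(h.commute₂.zpow_right _).right_comm, ← hsq, mul_assoc]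

theorem commutator_a₁_b₂ (h : CEvenRelations j k b c e f a₁ b₁ a₂ b₂ m) :
    ⁅a₁, b₂⁆ = m ^ (j + 2 * (f - b * e)) := by
  have hb₂ : b₂ = (a₁ ^ 2) ^ (-b) * b₁ * m ^ (-(f - b * e)) := by
    rw [h.b₁_eq_sq_zpow_mul]
    group
  have hsq : ⁅a₁, (a₁ ^ 2) ^ (-b)⁆ = 1 :=
    commutatorElement_eq_one_iff_commute.mpr (((Commute.refl a₁).pow_right 2).zpow_right _)
  have hsqm : Commute ((a₁ ^ 2) ^ (-b)) m := h.conjInverts₁.commute_sq_left.zpow_left _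
  have hm := h.conjInverts₁.commutator_zpow_right (-(f - b * e))
  calc ⁅a₁, b₂⁆ = ⁅a₁, (a₁ ^ 2) ^ (-b)⁆ * ⁅a₁, b₁⁆ * ⁅a₁, m ^ (-(f - b * e))⁆ := by
        rw [← commutator_mul_right_of_commute, ← commutator_mul_right_of_commute, ← hb₂]
        · rw [hm]
          exact (hsqm.mul_left h.commute₁).zpow_right _
        · rw [h.commutator₁]
          exact hsqm.zpow_right j
    _ = m ^ (j + 2 * (f - b * e)) := by
        rw [hsq, h.commutator₁, hm, one_mul, ← zpow_add, neg_mul_neg]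

theorem commute_m_gamma (h : CEvenRelations j k b c e f a₁ b₁ a₂ b₂ m) :
    Commute m (a₁⁻¹ * a₂ * b₂ ^ c) :=
  ((h.conjInverts₁.inv_left.commute_mul_left h.conjInverts₂).mul_left
    (h.commute₂.zpow_left c)).symm

theorem sq_a₂_mul_b₂_zpow (h : CEvenRelations j k b c e f a₁ b₁ a₂ b₂ m) :
    (a₂ * b₂ ^ c) ^ 2 = a₁ ^ 2 * m ^ (k * c - e) := by
  have hcomm : ⁅a₂, b₂ ^ c⁆ = m ^ (k * c) := by
    rw [commutator_zpow_right_of_commute, h.commutator₂, zpow_mul]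
    exact h.commutator₂ ▸ h.commute₂.zpow_right k
  calc (a₂ * b₂ ^ c) ^ 2 = a₂ ^ 2 * m ^ (k * c) * (b₂ ^ c) ^ 2 := by
        rw [ConjInverts.mul_sq (hcomm ▸ h.conjInverts₂.zpow_right _), hcomm]
    _ = a₂ ^ 2 * b₂ ^ (2 * c) * m ^ (k * c) := by
        rw [((h.commute₂.symm.zpow_zpow _ c).pow_right 2).right_comm, mul_comm 2 c, zpow_mul b₂,
          zpow_ofNat]
    _ = a₁ ^ 2 * m ^ (k * c - e) := by
        rw [h.sq_eq]
        group

theorem conj_inv_a₁_gamma (h : CEvenRelations j k b c e f a₁ b₁ a₂ b₂ m) :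
    a₁⁻¹ * (a₁⁻¹ * a₂ * b₂ ^ c) * a₁ = m ^ (k * c - e) * (a₁⁻¹ * a₂ * b₂ ^ c)⁻¹ := by
  calc a₁⁻¹ * (a₁⁻¹ * a₂ * b₂ ^ c) * a₁
      = (a₁ ^ 2)⁻¹ * (a₂ * b₂ ^ c) ^ 2 * (a₁⁻¹ * a₂ * b₂ ^ c)⁻¹ := by
        rw [sq (a₂ * b₂ ^ c)]
        group
    _ = m ^ (k * c - e) * (a₁⁻¹ * a₂ * b₂ ^ c)⁻¹ := by rw [h.sq_a₂_mul_b₂_zpow, inv_mul_cancel_left]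

theorem commutator_gamma_b₂ (h : CEvenRelations j k b c e f a₁ b₁ a₂ b₂ m) :
    ⁅a₁⁻¹ * a₂ * b₂ ^ c, b₂⁆ = m ^ (j - k + 2 * (f - b * e)) := by
  have hinv₁ : ConjInverts a₁ ⁅a₁, b₂⁆ := h.commutator_a₁_b₂ ▸ h.conjInverts₁.zpow_right _
  have hinv₂ : ConjInverts a₁⁻¹ ⁅a₂, b₂⁆ := h.commutator₂ ▸ h.conjInverts₁.inv_left.zpow_right k
  have hb₂ : ⁅b₂ ^ c, b₂⁆ = 1 := commutatorElement_eq_one_iff_commute.mpr (Commute.zpow_self b₂ c)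
  calc ⁅a₁⁻¹ * a₂ * b₂ ^ c, b₂⁆ = ⁅a₁⁻¹ * a₂, b₂⁆ := by
        rw [commutatorElement_mul_left_eq_conj_mul, hb₂, mul_one, mul_inv_cancel, one_mul]
    _ = ⁅a₂, b₂⁆⁻¹ * ⁅a₁, b₂⁆ := by
        rw [hinv₂.commutator_mul_left, hinv₁.commutator_inv_left]
    _ = m ^ (j - k + 2 * (f - b * e)) := by
        rw [h.commutator₂, h.commutator_a₁_b₂, ← zpow_neg, ← zpow_add]
        congr 1
        ring

theorem conj_inv_b₂_gamma (h : CEvenRelations j k b c e f a₁ b₁ a₂ b₂ m) :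
    b₂⁻¹ * (a₁⁻¹ * a₂ * b₂ ^ c) * b₂ =
      m ^ (j - k + 2 * (f - b * e)) * (a₁⁻¹ * a₂ * b₂ ^ c) := by
  rw [mul_assoc, inv_mul_eq_iff_eq_mul, ← mul_assoc, (h.commute₂.zpow_right _).eq,
    ← h.commutator_gamma_b₂, commutatorElement_def]
  group

end CEvenRelations

theorem cEven_gamma_relations_general {G : Type*} [Group G] {j k b c e f : ℤ}
    {a₁ b₁ a₂ b₂ m : G} (h : CEvenRelations j k b c e f a₁ b₁ a₂ b₂ m) :
    let γ : G := a₁⁻¹ * a₂ * b₂ ^ c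
    m * γ = γ * m ∧
    a₁ * b₂ * a₁⁻¹ * b₂⁻¹ = m ^ (j + 2 * (f - b * e)) ∧
    a₁⁻¹ * γ * a₁ = m ^ (k * c - e) * γ⁻¹ ∧
    b₂⁻¹ * γ * b₂ = m ^ (j - k + 2 * (f - b * e)) * γ :=
  ⟨h.commute_m_gamma.eq, h.commutator_a₁_b₂, h.conj_inv_a₁_gamma, h.conj_inv_b₂_gamma⟩

/-- The derived relations satisfied by `γ := α₁⁻¹α₂β₂^c` in the group (c-even) of the
paper: `mγ = γm`, `α₁β₂α₁⁻¹β₂⁻¹ = m^{j+2(f−be)}`, `α₁⁻¹γα₁ = m^{kc−e}γ⁻¹`, and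
`β₂⁻¹γβ₂ = m^{j−k+2(f−be)}γ`. -/
theorem cEven_gamma_relations (j k b c e f : ℤ)
    (hj : j = 0 ∨ j = 1) (hk : k = 0 ∨ k = 1) :
    let G := PresentedGroup (cEvenRels j k b c e f)
    let a1 : G := PresentedGroup.of GlueGen.a1
    let a2 : G := PresentedGroup.of GlueGen.a2
    let b2 : G := PresentedGroup.of GlueGen.b2
    let m : G := PresentedGroup.of GlueGen.m
    let γ : G := a1⁻¹ * a2 * b2 ^ c
    m * γ = γ * m ∧
    a1 * b2 * a1⁻¹ * b2⁻¹ = m ^ (j + 2 * (f - b * e)) ∧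
    a1⁻¹ * γ * a1 = m ^ (k * c - e) * γ⁻¹ ∧
    b2⁻¹ * γ * b2 = m ^ (j - k + 2 * (f - b * e)) * γ :=
  cEven_gamma_relations_general (cEvenRelations_of j k b c e f)
end

section
/- Let j, k ∈ {0,1} and let a, d, e, f be integers, set b := ad − 1, and let G be the group with presentation on generators α₁, β₁, α₂, β₂, m and relations α₁⁻¹mα₁ = m⁻¹, α₂⁻¹mα₂ = m⁻¹, β₁m = mβ₁, β₂m = mβ₂, α₁β₁α₁⁻¹β₁⁻¹ = m^j, α₂β₂α₂⁻¹β₂⁻¹ = m^k, α₁² = α₂^{2a}β₂m^e, β₁ = α₂^{2b}β₂^{d}m^f. Then the following relations hold in G: α₁·α₂² = α₂²·α₁·m^{j+2(f−de)} and α₂·α₁² = α₁²·α₂·m^{2e−k}. -/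
open FreeGroup in
/-- The relators of the presentation (c-odd) of the paper, with `b = ad − 1`:
`α₁⁻¹mα₁ = m⁻¹`, `α₂⁻¹mα₂ = m⁻¹`, `β₁m = mβ₁`, `β₂m = mβ₂`, `α₁β₁α₁⁻¹β₁⁻¹ = m^j`,
`α₂β₂α₂⁻¹β₂⁻¹ = m^k`, `α₁² = α₂^{2a}β₂m^e`, `β₁ = α₂^{2b}β₂^{d}m^f`. -/
def cOddRels (j k a d e f : ℤ) : Set (FreeGroup GlueGen) :=
  { (of GlueGen.a1)⁻¹ * of GlueGen.m * of GlueGen.a1 * of GlueGen.m,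
    (of GlueGen.a2)⁻¹ * of GlueGen.m * of GlueGen.a2 * of GlueGen.m,
    of GlueGen.b1 * of GlueGen.m * (of GlueGen.b1)⁻¹ * (of GlueGen.m)⁻¹,
    of GlueGen.b2 * of GlueGen.m * (of GlueGen.b2)⁻¹ * (of GlueGen.m)⁻¹,
    of GlueGen.a1 * of GlueGen.b1 * (of GlueGen.a1)⁻¹ * (of GlueGen.b1)⁻¹
      * (of GlueGen.m) ^ (-j),
    of GlueGen.a2 * of GlueGen.b2 * (of GlueGen.a2)⁻¹ * (of GlueGen.b2)⁻¹
      * (of GlueGen.m) ^ (-k),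
    (of GlueGen.a1) ^ 2
      * ((of GlueGen.a2) ^ (2 * a) * of GlueGen.b2 * (of GlueGen.m) ^ e)⁻¹,
    of GlueGen.b1
      * ((of GlueGen.a2) ^ (2 * (a * d - 1)) * (of GlueGen.b2) ^ d
          * (of GlueGen.m) ^ f)⁻¹ }

/-!
Each `αᵢ` inverts `m`. On elements commuting with `m`, the exponent `n` in
`αᵢ * x * αᵢ⁻¹ = m ^ n * x` is additive in `x`; it is `-2` for `m` and `0` for `αᵢ ^ 2`. The gluing
relation expresses `α₁ ^ 2` through `α₂ ^ 2`, `β₂` and `m`. Since `α₂ ^ 2`, `β₂` and `m` commute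
and the gluing matrix has determinant `1`, one can also solve for
`α₂ ^ 2 = (α₁ ^ 2) ^ d * m ^ (f - d * e) * β₁⁻¹`. Adding up exponents in these two expressions
gives both commutation relations.
-/

section Twist

variable {G : Type*} [Group G]

/-- `HasTwist m a n x` says that `x` commutes with `m` and that conjugation by `a` multiplies `x`
by `m ^ n`. The exponent is a parameter of a relation, not a function of `x`, because it is only
determined modulo the order of `m`. -/
structure HasTwist (m a : G) (n : ℤ) (x : G) : Prop where
  commute : Commute x m
  semiconjBy : SemiconjBy a x (m ^ n * x)

namespace HasTwist

variable {m a x y : G} {n p : ℤ}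

theorem mul (hx : HasTwist m a n x) (hy : HasTwist m a p y) :
    HasTwist m a (n + p) (x * y) where
  commute := hx.commute.mul_left hy.commute
  semiconjBy := by
    have hmul : m ^ n * x * (m ^ p * y) = m ^ (n + p) * (x * y) := by
      rw [mul_assoc, ← mul_assoc x, (hx.commute.zpow_right p).eq, zpow_add]
      simp only [mul_assoc]
    exact hmul ▸ hx.semiconjBy.mul_right hy.semiconjBy

theorem zpow (hx : HasTwist m a n x) (i : ℤ) : HasTwist m a (n * i) (x ^ i) where
  commute := hx.commute.zpow_left i
  semiconjBy := by
    rw [zpow_mul, ← (hx.commute.symm.zpow_left n).mul_zpow]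
    exact hx.semiconjBy.zpow_right i

theorem inv (hx : HasTwist m a n x) : HasTwist m a (-n) x⁻¹ := by
  simpa using hx.zpow (-1)

theorem self_of_inverts (ha : SemiconjBy a m m⁻¹) : HasTwist m a (-2) m where
  commute := .refl m
  semiconjBy := by
    have hm : m ^ (-2 : ℤ) * m = m⁻¹ := by group
    rwa [hm]

theorem commute_sq (ha : SemiconjBy a m m⁻¹) (hx : HasTwist m a n x) : Commute (a ^ 2) x := by
  have h := ((ha.zpow_right n).mul_right hx.semiconjBy).mul_left hx.semiconjBy
  rwa [inv_zpow, inv_mul_cancel_left, ← sq] at h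

theorem sq_of_inverts (ha : SemiconjBy a m m⁻¹) : HasTwist m a 0 (a ^ 2) where
  commute := (self_of_inverts ha).commute_sq ha
  semiconjBy := by
    rw [zpow_zero, one_mul]
    exact (Commute.refl a).pow_right 2

theorem mul_eq_mul_mul_zpow_neg (ha : SemiconjBy a m m⁻¹) (hx : HasTwist m a n x) :
    a * x = x * a * m ^ (-n) :=
  calc
    a * x = m ^ n * x * a := hx.semiconjBy.eq
    _ = x * (m ^ n * a) := by rw [← (hx.commute.zpow_right n).eq, mul_assoc]
    _ = x * a * m ^ (-n) := by
      rw [mul_assoc, (ha.zpow_right (-n)).eq, inv_zpow', neg_neg]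

end HasTwist

/-- This is where the gluing matrix having determinant `1` enters: the second coordinate of
`d * (a, 1, e) - (a * d - 1, d, f)` vanishes and the first is `1`. -/
theorem gluing_zpow_of_commute {x y z : G} (hxy : Commute x y) (hxz : Commute x z)
    (hyz : Commute y z) (a d e f : ℤ) :
    (x ^ a * y * z ^ e) ^ d =
      x * (x ^ (a * d - 1) * y ^ d * z ^ f) * z ^ (d * e - f) := by
  have hz : z ^ (e * d) = z ^ f * z ^ (d * e - f) := by rw [← zpow_add]; congr 1; ring
  have hx : x ^ (a * d) = x * x ^ (a * d - 1) := by rw [← zpow_one_add]; congr 1; ring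
  rw [(((hxz.zpow_left a).mul_left hyz).zpow_right e).mul_zpow, (hxy.zpow_left a).mul_zpow,
    ← zpow_mul, ← zpow_mul, hx, hz]
  simp only [mul_assoc]

section Gluing

variable {a₁ a₂ b₁ b₂ m : G} {j k a d e f : ℤ}

theorem sq_snd_eq_of_gluing (ha₂ : SemiconjBy a₂ m m⁻¹) (hb₂ : HasTwist m a₂ k b₂)
    (hA : a₁ ^ 2 = a₂ ^ (2 * a) * b₂ * m ^ e)
    (hB : b₁ = a₂ ^ (2 * (a * d - 1)) * b₂ ^ d * m ^ f) :
    a₂ ^ 2 = (a₁ ^ 2) ^ d * m ^ (f - d * e) * b₁⁻¹ := by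
  rw [zpow_mul, zpow_ofNat] at hA hB
  rw [hA, gluing_zpow_of_commute (hb₂.commute_sq ha₂) (HasTwist.sq_of_inverts ha₂).commute
    hb₂.commute a d e f, ← hB, mul_assoc _ (m ^ (d * e - f)), ← zpow_add, sub_add_sub_cancel,
    sub_self, zpow_zero, mul_one, mul_inv_cancel_right]

theorem hasTwist_sq_fst_of_gluing (ha₂ : SemiconjBy a₂ m m⁻¹) (hb₂ : HasTwist m a₂ k b₂)
    (hA : a₁ ^ 2 = a₂ ^ (2 * a) * b₂ * m ^ e) :
    HasTwist m a₂ (k - 2 * e) (a₁ ^ 2) := by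
  rw [hA, zpow_mul, zpow_ofNat]
  convert (((HasTwist.sq_of_inverts ha₂).zpow a).mul hb₂).mul
    ((HasTwist.self_of_inverts ha₂).zpow e) using 1
  ring

theorem hasTwist_sq_snd_of_gluing (ha₁ : SemiconjBy a₁ m m⁻¹) (ha₂ : SemiconjBy a₂ m m⁻¹)
    (hb₁ : HasTwist m a₁ j b₁) (hb₂ : HasTwist m a₂ k b₂)
    (hA : a₁ ^ 2 = a₂ ^ (2 * a) * b₂ * m ^ e)
    (hB : b₁ = a₂ ^ (2 * (a * d - 1)) * b₂ ^ d * m ^ f) :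
    HasTwist m a₁ (-(j + 2 * (f - d * e))) (a₂ ^ 2) := by
  rw [sq_snd_eq_of_gluing ha₂ hb₂ hA hB]
  convert (((HasTwist.sq_of_inverts ha₁).zpow d).mul
    ((HasTwist.self_of_inverts ha₁).zpow (f - d * e))).mul hb₁.inv using 1
  ring

end Gluing

end Twist

section PresentedGroup

variable {α : Type*} {rels : Set (FreeGroup α)} {m a x : α}

theorem semiconjBy_inv_of_mem_rels
    (h : (FreeGroup.of a)⁻¹ * FreeGroup.of m * FreeGroup.of a * FreeGroup.of m ∈ rels) :
    SemiconjBy (PresentedGroup.of (rels := rels) a) (.of m) (.of m)⁻¹ := by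
  have hconj : (PresentedGroup.of (rels := rels) a)⁻¹ * .of m * .of a * .of m = 1 :=
    PresentedGroup.one_of_mem h
  rw [mul_eq_one_iff_eq_inv, mul_assoc, inv_mul_eq_iff_eq_mul] at hconj
  rw [← SemiconjBy.inv_right_iff, inv_inv]
  exact hconj.symm

theorem HasTwist.of_mem_rels {n : ℤ}
    (hxm : FreeGroup.of x * FreeGroup.of m * (FreeGroup.of x)⁻¹ * (FreeGroup.of m)⁻¹ ∈ rels)
    (hax : FreeGroup.of a * FreeGroup.of x * (FreeGroup.of a)⁻¹ * (FreeGroup.of x)⁻¹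
      * FreeGroup.of m ^ (-n) ∈ rels) :
    HasTwist (PresentedGroup.of (rels := rels) m) (.of a) n (.of x) where
  commute := commutatorElement_eq_one_iff_commute.mp (PresentedGroup.one_of_mem hxm)
  semiconjBy := by
    have hcomm : PresentedGroup.of (rels := rels) a * .of x * (.of a)⁻¹ * (.of x)⁻¹
        * .of m ^ (-n) = 1 := PresentedGroup.one_of_mem hax
    rwa [zpow_neg, mul_inv_eq_one, mul_inv_eq_iff_eq_mul, mul_inv_eq_iff_eq_mul] at hcomm

end PresentedGroup

theorem cOdd_commutation_relations_general (j k a d e f : ℤ) :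
    let G := PresentedGroup (cOddRels j k a d e f)
    let a1 : G := PresentedGroup.of GlueGen.a1
    let a2 : G := PresentedGroup.of GlueGen.a2
    let m : G := PresentedGroup.of GlueGen.m
    a1 * a2 ^ 2 = a2 ^ 2 * a1 * m ^ (j + 2 * (f - d * e)) ∧
    a2 * a1 ^ 2 = a1 ^ 2 * a2 * m ^ (2 * e - k) := by
  intro G a1 a2 m
  let b1 : G := PresentedGroup.of GlueGen.b1
  let b2 : G := PresentedGroup.of GlueGen.b2
  have ha1 : SemiconjBy a1 m m⁻¹ := semiconjBy_inv_of_mem_rels (by simp [cOddRels])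
  have ha2 : SemiconjBy a2 m m⁻¹ := semiconjBy_inv_of_mem_rels (by simp [cOddRels])
  have hb1 : HasTwist m a1 j b1 :=
    .of_mem_rels (by simp [cOddRels]) (by simp [cOddRels])
  have hb2 : HasTwist m a2 k b2 :=
    .of_mem_rels (by simp [cOddRels]) (by simp [cOddRels])
  have glue_a1 : a1 ^ 2 = a2 ^ (2 * a) * b2 * m ^ e :=
    PresentedGroup.mk_eq_mk_of_mul_inv_mem (by simp [cOddRels])
  have glue_b1 : b1 = a2 ^ (2 * (a * d - 1)) * b2 ^ d * m ^ f :=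
    PresentedGroup.mk_eq_mk_of_mul_inv_mem (by simp [cOddRels])
  have a2_sq := hasTwist_sq_snd_of_gluing ha1 ha2 hb1 hb2 glue_a1 glue_b1
  have a1_sq := hasTwist_sq_fst_of_gluing ha2 hb2 glue_a1
  exact ⟨by simpa only [neg_neg] using a2_sq.mul_eq_mul_mul_zpow_neg ha1,
    by simpa only [neg_sub] using a1_sq.mul_eq_mul_mul_zpow_neg ha2⟩

/-- The commutation relations `α₁α₂² = α₂²α₁m^{j+2(f−de)}` and
`α₂α₁² = α₁²α₂m^{2e−k}`, derived in the paper from the presentation (c-odd). -/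
theorem cOdd_commutation_relations (j k a d e f : ℤ)
    (hj : j = 0 ∨ j = 1) (hk : k = 0 ∨ k = 1) :
    let G := PresentedGroup (cOddRels j k a d e f)
    let a1 : G := PresentedGroup.of GlueGen.a1
    let a2 : G := PresentedGroup.of GlueGen.a2
    let m : G := PresentedGroup.of GlueGen.m
    a1 * a2 ^ 2 = a2 ^ 2 * a1 * m ^ (j + 2 * (f - d * e)) ∧
    a2 * a1 ^ 2 = a1 ^ 2 * a2 * m ^ (2 * e - k) :=
  cOdd_commutation_relations_general j k a d e f
end
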